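/- Let U ⊆ ℂ be a nonempty connected open set. Then there exists a map h = (h₁, h₂) : U → ℝ² such that h₁ and h₂ are harmonic on U and h is a proper map from U to ℝ² (the preimage under h of every compact subset of ℝ² is a compact subset of U). In particular, taking U to be the open unit disk disproves the conjecture of Schoen and Yau that no proper harmonic map exists from the unit disk onto ℝ². (This is Theorem 5.6 of the paper for planar Riemann surfaces.) -/

import Mathlib

/-- A function `u : ℂ → ℝ` is harmonic on an open set `U ⊆ ℂ` (with `ℂ`
identified with `ℝ²` via the basis `1, i`) if it is twice continuously
differentiable on `U` and its Laplacian `∂²u/∂x² + ∂²u/∂y²` vanishes on `U`. -/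
def HarmonicOnC (u : ℂ → ℝ) (U : Set ℂ) : Prop :=
  ContDiffOn ℝ 2 u U ∧
    ∀ z ∈ U,
      fderiv ℝ (fun w : ℂ => fderiv ℝ u w 1) z 1 +
        fderiv ℝ (fun w : ℂ => fderiv ℝ u w Complex.I) z Complex.I = 0

/-!
If `l` is an exhaustion function of `U` and `F`, `G` are holomorphic on `U` with
`max (Re F) (Re G) > l`, then `(Re F, Re G)` is proper. Such a pair is a limit of pairs satisfying
the inequality on the members of an exhaustion of `U` by finite unions of dyadic squares without
holes in `U`. Adding squares one at a time, it suffices to extend the inequality from a compact `X`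
to `X ∪ T`, where `T` is a square with at least one side not shared with `X`, by a small change of
`F` and `G` on `X`.

Fibre `T` from its three other sides, the base, to this free side. As `Re F > l` or `Re G > l` at
each point of `X`, the base is covered by closed sets `P` and `Q` with finite overlap such that
`Re F > l` on `P ∩ X` and `Re G > l` on `Q ∩ X`. Over `P`, raise `Re F` above `l` on the base and on
the fibres through `P ∩ Q`, hence near them, and raise `Re G` above `l` on the rest, the core over
`P`; over `Q`, exchange the roles of `F` and `G`. The corrections come from Runge approximation, on
a compact set, of a smooth function whose gradient vanishes almost everywhere on this set, and no
holes arise because every gap around a core leads to the free side.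
-/

namespace ProperHarmonicMap

open Set Filter Topology MeasureTheory

section CauchyPompeiu

/-- Twice the Wirtinger derivative `∂φ/∂z̄`. -/
noncomputable def dbar (φ : ℂ → ℂ) (z : ℂ) : ℂ :=
  fderiv ℝ φ z 1 + Complex.I * fderiv ℝ φ z Complex.I

lemma dbar_mul_exp (φ : ℂ → ℂ) (z : ℂ) (θ : ℝ) :
    dbar φ z * Complex.exp (-(θ * Complex.I)) =
      fderiv ℝ φ z (Complex.exp (θ * Complex.I)) +
        Complex.I * fderiv ℝ φ z (Complex.exp (θ * Complex.I) * Complex.I) := by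
  have radial : Complex.exp (θ * Complex.I) =
      Real.cos θ • (1 : ℂ) + Real.sin θ • Complex.I := by
    simp [Complex.exp_mul_I]
  have angular : Complex.exp (θ * Complex.I) * Complex.I =
      (-Real.sin θ) • (1 : ℂ) + Real.cos θ • Complex.I := by
    simp only [Complex.exp_mul_I, Complex.real_smul]
    push_cast
    linear_combination Complex.sin θ * Complex.I_sq
  have conj : Complex.exp (-(θ * Complex.I)) = Real.cos θ - Real.sin θ * Complex.I := by
    rw [← neg_mul, Complex.exp_mul_I]
    simp [sub_eq_add_neg]
  rw [angular, radial, conj, dbar]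
  simp only [map_add, map_smul]
  simp only [Complex.real_smul]
  push_cast
  linear_combination (-(fderiv ℝ φ z) Complex.I * Complex.sin θ) * Complex.I_sq

variable {φ : ℂ → ℂ}

lemma continuous_dbar (hφ : ContDiff ℝ 1 φ) : Continuous (dbar φ) := by
  have hD : Continuous (fderiv ℝ φ) := hφ.continuous_fderiv one_ne_zero
  exact (hD.clm_apply continuous_const).add
    (continuous_const.mul (hD.clm_apply continuous_const))

lemma hasCompactSupport_dbar (hc : HasCompactSupport φ) : HasCompactSupport (dbar φ) :=
  (hc.fderiv ℝ).mono fun z hz hz0 => hz (by simp [dbar, hz0])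

lemma exists_radius_circleMap_notMem (hc : HasCompactSupport φ) (z : ℂ) :
    ∃ R, ∀ r θ : ℝ, R < r → circleMap z r θ ∉ tsupport φ := by
  obtain ⟨R, hR⟩ := hc.isBounded.subset_closedBall z
  refine ⟨R, fun r θ hr hmem => ?_⟩
  have hrR : |r| ≤ R := by simpa [circleMap, dist_eq_norm] using hR hmem
  exact hr.not_ge ((le_abs_self r).trans hrR)

lemma fderiv_eq_zero_of_notMem_tsupport {z : ℂ} (hz : z ∉ tsupport φ) : fderiv ℝ φ z = 0 :=
  Function.notMem_support.1 fun h => hz (support_fderiv_subset ℝ h)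

lemma continuous_fderiv_circleMap (hφ : ContDiff ℝ 1 φ) (z : ℂ) {v : ℝ → ℂ} (hv : Continuous v) :
    Continuous fun p : ℝ × ℝ => fderiv ℝ φ (circleMap z p.1 p.2) (v p.2) :=
  ((hφ.continuous_fderiv one_ne_zero).comp (by unfold circleMap; fun_prop)).clm_apply
    (hv.comp continuous_snd)

lemma integrableOn_fderiv_circleMap (hφ : ContDiff ℝ 1 φ) (hc : HasCompactSupport φ) (z : ℂ)
    {v : ℝ → ℂ} (hv : Continuous v) :
    IntegrableOn (fun p : ℝ × ℝ => fderiv ℝ φ (circleMap z p.1 p.2) (v p.2))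
      (Ioi 0 ×ˢ Ioo (-Real.pi) Real.pi) := by
  obtain ⟨R, hR⟩ := exists_radius_circleMap_notMem hc z
  have hcompact := (continuous_fderiv_circleMap hφ z hv).continuousOn.integrableOn_compact
    (μ := volume) (isCompact_Icc.prod isCompact_Icc : IsCompact (Icc 0 R ×ˢ Icc (-Real.pi) Real.pi))
  refine hcompact.of_forall_sdiff_eq_zero (measurableSet_Ioi.prod measurableSet_Ioo) ?_
  rintro ⟨r, θ⟩ ⟨⟨hr, hθ⟩, hrθ⟩
  have hRr : R < r := lt_of_not_ge fun h => hrθ ⟨⟨le_of_lt hr, h⟩, Ioo_subset_Icc_self hθ⟩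
  simp [fderiv_eq_zero_of_notMem_tsupport (hR r θ hRr)]

lemma integral_radial_fderiv (hφ : ContDiff ℝ 1 φ) (hc : HasCompactSupport φ) (z : ℂ) (θ : ℝ) :
    ∫ r in Ioi (0 : ℝ), fderiv ℝ φ (circleMap z r θ) (Complex.exp (θ * Complex.I)) = -φ z := by
  obtain ⟨R, hR⟩ := exists_radius_circleMap_notMem hc z
  have hderiv (r : ℝ) : HasDerivAt (fun r : ℝ => φ (circleMap z r θ))
      (fderiv ℝ φ (circleMap z r θ) (Complex.exp (θ * Complex.I))) r := by
    have hcircle : HasDerivAt (fun r : ℝ => circleMap z r θ) (Complex.exp (θ * Complex.I)) r := by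
      simpa [circleMap] using
        (((hasDerivAt_id r).ofReal_comp).mul_const (Complex.exp (θ * Complex.I))).const_add z
    exact (hφ.differentiable one_ne_zero _).hasFDerivAt.comp_hasDerivAt r hcircle
  have hcont : Continuous fun r : ℝ =>
      fderiv ℝ φ (circleMap z r θ) (Complex.exp (θ * Complex.I)) :=
    (continuous_fderiv_circleMap hφ z (v := fun θ => Complex.exp (θ * Complex.I))
      (by fun_prop)).comp (by fun_prop : Continuous fun r : ℝ => (r, θ))
  have hint : IntegrableOn
      (fun r : ℝ => fderiv ℝ φ (circleMap z r θ) (Complex.exp (θ * Complex.I))) (Ioi 0) := by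
    refine (hcont.continuousOn.integrableOn_compact
      (isCompact_Icc (a := 0) (b := R))).of_forall_sdiff_eq_zero measurableSet_Ioi ?_
    rintro r ⟨hr, hrR⟩
    have hRr : R < r := lt_of_not_ge fun h => hrR ⟨le_of_lt hr, h⟩
    simp [fderiv_eq_zero_of_notMem_tsupport (hR r θ hRr)]
  have hlim : Tendsto (fun r : ℝ => φ (circleMap z r θ)) atTop (𝓝 0) :=
    tendsto_const_nhds.congr' <| (eventually_gt_atTop R).mono fun r hr =>
      (image_eq_zero_of_notMem_tsupport (hR r θ hr)).symm
  simpa [circleMap] using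
    integral_Ioi_of_hasDerivAt_of_tendsto' (a := 0) (fun r _ => hderiv r) hint hlim

lemma integral_angular_fderiv (hφ : ContDiff ℝ 1 φ) (z : ℂ) {r : ℝ} (hr : r ≠ 0) :
    ∫ θ in Ioo (-Real.pi) Real.pi,
      fderiv ℝ φ (circleMap z r θ) (Complex.exp (θ * Complex.I) * Complex.I) = 0 := by
  have hderiv (θ : ℝ) : HasDerivAt (fun θ : ℝ => φ (circleMap z r θ))
      (r • fderiv ℝ φ (circleMap z r θ) (Complex.exp (θ * Complex.I) * Complex.I)) θ := by
    rw [← map_smul, Complex.real_smul, ← mul_assoc, ← circleMap_zero]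
    exact (hφ.differentiable one_ne_zero _).hasFDerivAt.comp_hasDerivAt θ
      (hasDerivAt_circleMap z r θ)
  have hcont : Continuous fun θ : ℝ =>
      r • fderiv ℝ φ (circleMap z r θ) (Complex.exp (θ * Complex.I) * Complex.I) :=
    ((continuous_fderiv_circleMap hφ z (v := fun θ => Complex.exp (θ * Complex.I) * Complex.I)
      (by fun_prop)).comp (by fun_prop : Continuous fun θ : ℝ => (r, θ))).const_smul r
  have hperiod : circleMap z r Real.pi = circleMap z r (-Real.pi) := by
    simp [circleMap, Complex.exp_neg]
  have hftc := intervalIntegral.integral_eq_sub_of_hasDerivAt (fun θ _ => hderiv θ)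
    (hcont.intervalIntegrable (-Real.pi) Real.pi)
  rw [hperiod, sub_self, intervalIntegral.integral_smul,
    intervalIntegral.integral_of_le (by linarith [Real.pi_pos]), integral_Ioc_eq_integral_Ioo,
    smul_eq_zero] at hftc
  exact hftc.resolve_left hr

lemma integral_dbar_mul_inv_eq_polar (φ : ℂ → ℂ) (z : ℂ) :
    ∫ ζ, dbar φ ζ * (ζ - z)⁻¹ = ∫ p in Ioi (0 : ℝ) ×ˢ Ioo (-Real.pi) Real.pi,
      (fderiv ℝ φ (circleMap z p.1 p.2) (Complex.exp (p.2 * Complex.I)) +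
        Complex.I *
          fderiv ℝ φ (circleMap z p.1 p.2) (Complex.exp (p.2 * Complex.I) * Complex.I)) := by
  rw [← integral_add_left_eq_self _ z, ← Complex.integral_comp_polarCoord_symm]
  refine setIntegral_congr_fun polarCoord.open_target.measurableSet ?_
  rintro ⟨r, θ⟩ ⟨hr, -⟩
  have hr : (r : ℂ) ≠ 0 := Complex.ofReal_ne_zero.2 (ne_of_gt hr)
  have hpolar : z + Complex.polarCoord.symm (r, θ) = circleMap z r θ := by
    simp [circleMap, Complex.exp_mul_I]
  have hkernel : r • (circleMap z r θ - z)⁻¹ = Complex.exp (-(θ * Complex.I)) := by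
    rw [circleMap_sub_center, circleMap_zero, Complex.exp_neg, mul_inv, Complex.real_smul,
      mul_inv_cancel_left₀ hr]
  simp only [hpolar]
  rw [← mul_smul_comm, hkernel, dbar_mul_exp]

lemma integral_dbar_mul_inv (hφ : ContDiff ℝ 1 φ) (hc : HasCompactSupport φ) (z : ℂ) :
    ∫ ζ, dbar φ ζ * (ζ - z)⁻¹ = -(2 * Real.pi * φ z) := by
  have hrad := integrableOn_fderiv_circleMap hφ hc z
    (v := fun θ => Complex.exp (θ * Complex.I)) (by fun_prop)
  have hang := integrableOn_fderiv_circleMap hφ hc z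
    (v := fun θ => Complex.exp (θ * Complex.I) * Complex.I) (by fun_prop)
  have hrad_swap := hrad
  rw [IntegrableOn, Measure.volume_eq_prod, ← Measure.prod_restrict] at hrad_swap
  rw [integral_dbar_mul_inv_eq_polar, integral_add hrad (hang.const_mul _), integral_const_mul,
    Measure.volume_eq_prod, setIntegral_prod _ hang,
    setIntegral_eq_zero_of_forall_eq_zero (t := Ioi (0 : ℝ)) fun r hr =>
      integral_angular_fderiv hφ z (ne_of_gt hr),
    ← Measure.prod_restrict, integral_prod_symm _ hrad_swap]
  simp only [integral_radial_fderiv hφ hc, integral_const,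
    measureReal_restrict_apply .univ, univ_inter, Complex.real_smul,
    Real.volume_real_Ioo_of_le (neg_le_self Real.pi_pos.le)]
  push_cast
  ring

end CauchyPompeiu

section Runge

lemma locallyIntegrable_inv : LocallyIntegrable fun ζ : ℂ => ζ⁻¹ := by
  rw [locallyIntegrable_iff]
  intro k hk
  obtain ⟨R, hR⟩ := hk.isBounded.subset_closedBall 0
  have hradial : Integrable fun ζ : ℂ => (Iic R).indicator (fun r : ℝ => r⁻¹) ‖ζ‖ := by
    rw [integrable_fun_norm_addHaar volume (f := (Iic R).indicator fun r : ℝ => r⁻¹),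
      Complex.finrank_real_complex]
    refine IntegrableOn.of_forall_sdiff_eq_zero (s := Ioc 0 R) ?_ measurableSet_Ioi ?_
    · refine (integrableOn_const (C := (1 : ℝ)) (by simp)).congr_fun
        (fun r hr => ?_) measurableSet_Ioc
      simp [hr.2, hr.1.ne']
    · rintro r ⟨hr, hrR⟩
      have hRr : ¬ r ≤ R := fun h => hrR ⟨hr, h⟩
      simp [hRr]
  refine (hradial.integrableOn (s := k)).mono' (by fun_prop) ?_
  filter_upwards [ae_restrict_mem hk.measurableSet] with ζ hζ
  have hζR : ‖ζ‖ ≤ R := by simpa using hR hζ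
  simp [hζR]

lemma exists_setLIntegral_enorm_sub_lt {E F : Type*} [NormedAddCommGroup E] [ProperSpace E]
    [MeasurableSpace E] [BorelSpace E] {μ : Measure E} [μ.IsAddRightInvariant]
    [NormedAddCommGroup F] {f : E → F} (hf : LocallyIntegrable f μ) (R : ℝ) {ε : ENNReal}
    (hε : ε ≠ 0) :
    ∃ δ > 0, ∀ (N : Set E) (z : E), N ⊆ Metric.closedBall z R → μ N < δ →
      ∫⁻ ζ in N, ‖f (ζ - z)‖ₑ ∂μ < ε := by
  have hball := hf.integrableOn_isCompact (isCompact_closedBall (0 : E) R)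
  obtain ⟨δ, hδ, h⟩ := exists_pos_setLIntegral_lt_of_measure_lt hball.2.ne hε
  refine ⟨δ, hδ, fun N z hN hμN => ?_⟩
  have hmp := measurePreserving_sub_right μ z
  have hemb := MeasurableEquiv.measurableEmbedding (.subRight z)
  have hNball : (· - z) '' N ⊆ Metric.closedBall 0 R := by
    rintro _ ⟨ζ, hζ, rfl⟩
    simpa [dist_eq_norm] using hN hζ
  rw [hmp.setLIntegral_comp_emb hemb (fun w => ‖f w‖ₑ),
    ← Measure.restrict_restrict_of_subset hNball]
  refine h _ ((Measure.restrict_apply_le _ _).trans_lt ?_)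
  rwa [← hmp.measure_preimage_emb hemb,
    preimage_image_eq _ (sub_left_injective : Function.Injective (· - z))]

lemma exists_measure_thickening_sdiff_lt {α : Type*} [PseudoMetricSpace α] [ProperSpace α]
    [MeasurableSpace α] [BorelSpace α] (μ : Measure α) [IsFiniteMeasureOnCompacts μ] {K : Set α}
    (hK : IsCompact K) (hKc : IsClosed K) {δ : ENNReal} (hδ : 0 < δ) :
    ∃ η > 0, μ (Metric.thickening η K \ K) < δ := by
  have hKfin : μ K ≠ ⊤ := hK.measure_lt_top.ne
  have htendsto := tendsto_measure_thickening_of_isClosed (μ := μ)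
    ⟨1, one_pos, hK.isBounded.thickening.measure_lt_top.ne⟩ hKc
  obtain ⟨η, hμη, hη⟩ := ((htendsto.eventually
    (gt_mem_nhds (ENNReal.lt_add_right hKfin hδ.ne'))).and self_mem_nhdsWithin).exists
  refine ⟨η, hη, ?_⟩
  rw [measure_sdiff (Metric.self_subset_thickening hη K) hKc.measurableSet.nullMeasurableSet hKfin]
  exact ENNReal.sub_lt_of_lt_add (measure_mono (Metric.self_subset_thickening hη K))
    (by rwa [add_comm])

section CauchyTransform

variable {g : ℂ → ℂ} (hg : Continuous g) (hc : HasCompactSupport g)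

include hg hc

lemma integrable_mul_inv_sub (z : ℂ) : Integrable fun ζ => g ζ * (ζ - z)⁻¹ := by
  have hshift := locallyIntegrable_inv.integrable_smul_left_of_hasCompactSupport
    (hg.comp (continuous_add_const z)) (hc.comp_homeomorph (Homeomorph.addRight z))
  simpa using hshift.comp_sub_right z

lemma exists_isCompact_norm_integral_compl_le {K : Set ℂ} (hK : IsCompact K)
    (h0 : ∀ᵐ ζ, ζ ∈ K → g ζ = 0) {ε : ℝ} (hε : 0 < ε) :
    ∃ C ⊆ Kᶜ, IsCompact C ∧ ∀ z ∈ K, ‖∫ ζ in Cᶜ, g ζ * (ζ - z)⁻¹‖ ≤ ε := by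
  obtain ⟨B, hB⟩ := hg.bounded_above_of_compact_support hc
  obtain ⟨R, hR⟩ := (hc.isBounded.union hK.isBounded).subset_closedBall 0
  obtain ⟨δ, hδ, hsmall⟩ := exists_setLIntegral_enorm_sub_lt (locallyIntegrable_inv.smul (B : ℂ))
    (2 * R) (ENNReal.ofReal_pos.2 hε).ne'
  obtain ⟨η, hη, hμη⟩ := exists_measure_thickening_sdiff_lt volume hK hK.isClosed hδ
  have hC : IsCompact (tsupport g \ Metric.thickening η K) := hc.diff Metric.isOpen_thickening
  refine ⟨_, fun ζ hζ hk => hζ.2 (Metric.self_subset_thickening hη K hk), hC, fun z hz => ?_⟩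
  set N : Set ℂ := tsupport g ∩ (Metric.thickening η K \ K)
  have hNball : N ⊆ Metric.closedBall z (2 * R) := fun ζ hζ => by
    have hζR := hR (Or.inl hζ.1)
    have hzR := hR (Or.inr hz)
    rw [mem_closedBall_zero_iff] at hζR hzR
    rw [mem_closedBall_iff_norm]
    linarith [norm_sub_le ζ z]
  have hconcentrated : ∫ ζ in (tsupport g \ Metric.thickening η K)ᶜ, g ζ * (ζ - z)⁻¹ =
      ∫ ζ in N, g ζ * (ζ - z)⁻¹ := by
    refine setIntegral_eq_of_subset_of_ae_sdiff_eq_zero hC.measurableSet.compl.nullMeasurableSet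
      (fun ζ hζ hζC => hζC.2 hζ.2.1) ?_
    filter_upwards [h0] with ζ hζ hζN
    have hgζ : g ζ = 0 := by
      by_contra hne
      have hsupp : ζ ∈ tsupport g := subset_tsupport g hne
      exact hζN.2 ⟨hsupp, not_not.1 fun h => hζN.1 ⟨hsupp, h⟩, fun hk => hne (hζ hk)⟩
    rw [hgζ, zero_mul]
  have hbound : ‖∫ ζ in N, g ζ * (ζ - z)⁻¹‖ₑ ≤ ENNReal.ofReal ε :=
    calc ‖∫ ζ in N, g ζ * (ζ - z)⁻¹‖ₑ ≤ ∫⁻ ζ in N, ‖g ζ * (ζ - z)⁻¹‖ₑ :=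
          enorm_integral_le_lintegral_enorm _
      _ ≤ ∫⁻ ζ in N, ‖((B : ℂ) • fun ζ : ℂ => ζ⁻¹) (ζ - z)‖ₑ := by
          refine lintegral_mono fun ζ => ?_
          simp only [Pi.smul_apply, smul_eq_mul, enorm_mul]
          gcongr
          rw [enorm_le_iff_norm_le, Complex.norm_real]
          exact (hB ζ).trans (le_abs_self B)
      _ ≤ ENNReal.ofReal ε :=
          (hsmall N z hNball ((measure_mono inter_subset_right).trans_lt hμη)).le
  rw [hconcentrated]
  rwa [← ofReal_norm, ENNReal.ofReal_le_ofReal_iff hε.le] at hbound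

end CauchyTransform

lemma integral_mem_of_isClosed {α 𝕜 E : Type*} [MeasurableSpace α] {μ : Measure α} [RCLike 𝕜]
    [NormedAddCommGroup E] [NormedSpace ℝ E] [NormedSpace 𝕜 E] [CompleteSpace E]
    (S : Submodule 𝕜 E) (hS : IsClosed (S : Set E)) {f : α → E} (hf : Integrable f μ)
    (h : ∀ᵐ x ∂μ, f x ∈ S) : ∫ x, f x ∂μ ∈ S := by
  have := hS
  rw [← Submodule.Quotient.mk_eq_zero S]
  change S.mkQL _ = 0
  rw [← ContinuousLinearMap.integral_comp_comm _ hf]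
  exact integral_eq_zero_of_ae (h.mono fun x hx => by simpa using hx)

/-- `X` leaves no holes in `U`: every bounded component of the complement of `X` contains a point
outside `U`. For compact `X ⊆ U` this is the hypothesis of Runge's theorem. -/
def HoleFree (U X : Set ℂ) : Prop :=
  ∀ b ∉ X, ¬ Bornology.IsBounded (connectedComponentIn Xᶜ b) ∨
    ∃ e ∈ connectedComponentIn Xᶜ b, e ∉ U

/-- The restrictions to `K` of holomorphic functions on `U`. -/
def holomorphicRestrict (U K : Set ℂ) : Subalgebra ℂ C(K, ℂ) where
  carrier := {f | ∃ F : ℂ → ℂ, DifferentiableOn ℂ F U ∧ ∀ z : K, f z = F z}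
  mul_mem' := by
    rintro f g ⟨F, hF, hf⟩ ⟨G, hG, hg⟩
    exact ⟨fun z => F z * G z, hF.mul hG, fun z => by simp [hf, hg]⟩
  add_mem' := by
    rintro f g ⟨F, hF, hf⟩ ⟨G, hG, hg⟩
    exact ⟨fun z => F z + G z, hF.add hG, fun z => by simp [hf, hg]⟩
  algebraMap_mem' c := ⟨fun _ => c, differentiableOn_const c, fun z => by simp⟩

open Classical in
/-- The Cauchy kernel `z ↦ (ζ - z)⁻¹` with pole `ζ` as a continuous function on `K`, a junk value
when the pole lies in `K`. -/
noncomputable def cauchyKernel (K : Set ℂ) (ζ : ℂ) : C(K, ℂ) :=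
  if h : Continuous fun z : K => (ζ - z)⁻¹ then ⟨_, h⟩ else 0

section CauchyKernel

variable {U K : Set ℂ} {ζ : ℂ}

lemma sub_ne_zero_of_notMem (hζ : ζ ∉ K) (z : K) : ζ - z ≠ 0 :=
  sub_ne_zero.2 fun h => hζ (h ▸ z.2)

lemma cauchyKernel_apply (hζ : ζ ∉ K) (z : K) : cauchyKernel K ζ z = (ζ - z)⁻¹ := by
  have hcont : Continuous fun z : K => (ζ - z)⁻¹ :=
    Continuous.inv₀ (by fun_prop) (sub_ne_zero_of_notMem hζ)
  rw [cauchyKernel, dif_pos hcont]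
  rfl

lemma continuousOn_cauchyKernel (K : Set ℂ) : ContinuousOn (cauchyKernel K) Kᶜ := by
  rw [continuousOn_iff_continuous_domRestrict]
  have hjoint : Continuous fun p : ↥Kᶜ × K => ((p.1 : ℂ) - p.2)⁻¹ :=
    Continuous.inv₀ (by fun_prop) fun p => sub_ne_zero_of_notMem p.1.2 p.2
  convert (ContinuousMap.curry ⟨_, hjoint⟩).continuous using 1
  ext ζ z
  exact cauchyKernel_apply ζ.2 z

lemma cauchyKernel_mem_iff_notMem_spectrum {S : Subalgebra ℂ C(K, ℂ)}
    (hS : (ContinuousMap.id ℂ).restrict K ∈ S) (hζ : ζ ∉ K) :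
    cauchyKernel K ζ ∈ S ↔ ζ ∉ spectrum ℂ (⟨_, hS⟩ : S) := by
  rw [spectrum.notMem_iff]
  constructor
  · intro hmem
    refine IsUnit.of_mul_eq_one ⟨_, hmem⟩ ?_
    ext z
    change (ζ - z) * cauchyKernel K ζ z = 1
    rw [cauchyKernel_apply hζ, mul_inv_cancel₀ (sub_ne_zero_of_notMem hζ z)]
  · intro hunit
    obtain ⟨y, hy⟩ := hunit.exists_right_inv
    convert y.2
    ext z
    have hyz : (ζ - z) * (y : C(K, ℂ)) z = 1 := congrArg (fun f : S => (f : C(K, ℂ)) z) hy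
    rw [cauchyKernel_apply hζ, eq_inv_of_mul_eq_one_right hyz]

lemma cauchyKernel_mem_holomorphicRestrict (hKU : K ⊆ U) (hζ : ζ ∉ U) :
    cauchyKernel K ζ ∈ holomorphicRestrict U K :=
  ⟨fun z => (ζ - z)⁻¹,
    ((differentiableOn_const ζ).sub differentiableOn_id).inv fun z hz =>
      sub_ne_zero_of_notMem hζ ⟨z, hz⟩,
    cauchyKernel_apply fun h => hζ (hKU h)⟩

-- Enlarging `C(K, ℂ)` to a closed subalgebra can only fill in whole bounded components of `Kᶜ` in
-- the spectrum of the coordinate; those that meet `Uᶜ` are not filled in.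
lemma cauchyKernel_mem_topologicalClosure [CompactSpace K] (hKU : K ⊆ U) (h : HoleFree U K)
    (hζ : ζ ∉ K) : cauchyKernel K ζ ∈ (holomorphicRestrict U K).topologicalClosure := by
  set S := (holomorphicRestrict U K).topologicalClosure
  have : IsClosed (S : Set C(K, ℂ)) := Subalgebra.isClosed_topologicalClosure _
  have hid : (ContinuousMap.id ℂ).restrict K ∈ S :=
    Subalgebra.le_topologicalClosure _ ⟨id, differentiableOn_id, fun _ => rfl⟩
  let x : S := ⟨_, hid⟩
  have hx : spectrum ℂ (x : C(K, ℂ)) = K := by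
    rw [ContinuousMap.spectrum_eq_range]
    exact Subtype.range_coe
  rw [cauchyKernel_mem_iff_notMem_spectrum hid hζ]
  intro hspec
  rcases h ζ hζ with hunbdd | ⟨e, he, heU⟩
  · exact hunbdd (hx ▸ Subalgebra.spectrum_isBounded_connectedComponentIn S x hspec)
  · have heS : e ∉ spectrum ℂ x :=
      (cauchyKernel_mem_iff_notMem_spectrum hid fun heK => heU (hKU heK)).1
        (Subalgebra.le_topologicalClosure _ (cauchyKernel_mem_holomorphicRestrict hKU heU))
    rw [Subalgebra.spectrum_sUnion_connectedComponentIn S x, hx] at heS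
    exact heS (Or.inr (mem_biUnion (show ζ ∈ spectrum ℂ x \ K from ⟨hspec, hζ⟩) he))

lemma exists_differentiableOn_norm_sub_integral_lt (hK : IsCompact K) (hKU : K ⊆ U)
    (h : HoleFree U K) {C : Set ℂ} (hC : IsCompact C) (hCK : C ⊆ Kᶜ) {g : ℂ → ℂ}
    (hg : ContinuousOn g C) {ε : ℝ} (hε : 0 < ε) :
    ∃ f : ℂ → ℂ, DifferentiableOn ℂ f U ∧
      ∀ z ∈ K, ‖f z - ∫ ζ in C, g ζ * (ζ - z)⁻¹‖ < ε := by
  have := isCompact_iff_compactSpace.1 hK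
  set S := (holomorphicRestrict U K).topologicalClosure
  have hint : IntegrableOn (fun ζ => g ζ • cauchyKernel K ζ) C :=
    (hg.smul ((continuousOn_cauchyKernel K).mono hCK)).integrableOn_compact hC
  have hmem : ∫ ζ in C, g ζ • cauchyKernel K ζ ∈ Subalgebra.toSubmodule S := by
    refine integral_mem_of_isClosed _ (Subalgebra.isClosed_topologicalClosure _) hint ?_
    filter_upwards [ae_restrict_mem hC.measurableSet] with ζ hζ
    exact Submodule.smul_mem _ _ (cauchyKernel_mem_topologicalClosure hKU h (hCK hζ))
  obtain ⟨F, ⟨f, hf, hFf⟩, hF⟩ := Metric.mem_closure_iff.1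
    (show _ ∈ closure (holomorphicRestrict U K : Set C(K, ℂ)) from hmem) ε hε
  refine ⟨f, hf, fun z hz => ?_⟩
  have heval : (∫ ζ in C, g ζ • cauchyKernel K ζ) ⟨z, hz⟩ = ∫ ζ in C, g ζ * (ζ - z)⁻¹ := by
    refine ((ContinuousMap.evalCLM ℂ (⟨z, hz⟩ : K)).integral_comp_comm hint).symm.trans
      (setIntegral_congr_fun hC.measurableSet fun ζ hζ => ?_)
    change g ζ * cauchyKernel K ζ ⟨z, hz⟩ = _
    rw [cauchyKernel_apply (hCK hζ)]
  rw [← heval, ← hFf ⟨z, hz⟩, ← dist_eq_norm, dist_comm]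
  exact (ContinuousMap.dist_apply_le_dist _).trans_lt hF

end CauchyKernel

variable {U K : Set ℂ}

lemma exists_differentiableOn_norm_sub_lt (hK : IsCompact K) (hKU : K ⊆ U) (h : HoleFree U K)
    {φ : ℂ → ℂ} (hφ : ContDiff ℝ 1 φ) (hc : HasCompactSupport φ)
    (h0 : ∀ᵐ ζ, ζ ∈ K → dbar φ ζ = 0) {ε : ℝ} (hε : 0 < ε) :
    ∃ f : ℂ → ℂ, DifferentiableOn ℂ f U ∧ ∀ z ∈ K, ‖f z - φ z‖ < ε := by
  have hg := continuous_dbar hφ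
  have hgc := hasCompactSupport_dbar hc
  obtain ⟨C, hCK, hC, htail⟩ := exists_isCompact_norm_integral_compl_le hg hgc hK h0 hε
  obtain ⟨f, hf, happrox⟩ :=
    exists_differentiableOn_norm_sub_integral_lt hK hKU h hC hCK hg.continuousOn hε
  have hpi : (2 * Real.pi : ℂ) ≠ 0 := by simp [Real.pi_ne_zero]
  refine ⟨fun z => -(2 * Real.pi : ℂ)⁻¹ * f z, hf.const_mul _, fun z hz => ?_⟩
  have hpompeiu := integral_dbar_mul_inv hφ hc z
  rw [← integral_add_compl hC.measurableSet (integrable_mul_inv_sub hg hgc z)] at hpompeiu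
  have herror : -(2 * Real.pi : ℂ)⁻¹ * f z - φ z = (2 * Real.pi : ℂ)⁻¹ *
      ((∫ ζ in Cᶜ, dbar φ ζ * (ζ - z)⁻¹) - (f z - ∫ ζ in C, dbar φ ζ * (ζ - z)⁻¹)) := by
    linear_combination (-(2 * Real.pi : ℂ)⁻¹) * hpompeiu + φ z * inv_mul_cancel₀ hpi
  have hnorm : ‖(2 * Real.pi : ℂ)⁻¹‖ ≤ 1 / 2 := by
    rw [norm_inv, norm_mul, Complex.norm_real, Real.norm_eq_abs, abs_of_pos Real.pi_pos]
    simp only [Complex.norm_ofNat, one_div]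
    gcongr
    nlinarith [Real.pi_gt_three]
  rw [herror, norm_mul]
  calc _ ≤ 1 / 2 * (ε + ‖f z - ∫ ζ in C, dbar φ ζ * (ζ - z)⁻¹‖) := by
        gcongr
        exact (norm_sub_le _ _).trans (by gcongr; exact htail z hz)
    _ < ε := by linarith [happrox z hz]

end Runge

section Correction

variable {U K X R : Set ℂ}

lemma HoleFree.of_subset {Y : Set ℂ} (hY : HoleFree U Y) (hKY : K ⊆ Y)
    (h : ∀ b ∈ Y, b ∉ K → ∃ e ∉ Y, e ∈ connectedComponentIn Kᶜ b) : HoleFree U K := by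
  intro b hb
  obtain ⟨e, heY, he⟩ : ∃ e ∉ Y, e ∈ connectedComponentIn Kᶜ b := by
    by_cases hbY : b ∈ Y
    · exact h b hbY hb
    · exact ⟨b, hbY, mem_connectedComponentIn hb⟩
  rw [connectedComponentIn_eq he]
  have hsub := connectedComponentIn_mono e (compl_subset_compl.2 hKY)
  exact (hY e heY).imp (fun hunbdd hbdd => hunbdd (hbdd.subset hsub))
    fun ⟨x, hx, hxU⟩ => ⟨x, hsub hx, hxU⟩

lemma dbar_ofReal_eq_zero {f : ℂ → ℝ} {z : ℂ} (hf : DifferentiableAt ℝ f z)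
    (h : fderiv ℝ f z = 0) : dbar (fun w => (f w : ℂ)) z = 0 := by
  have hcomp : HasFDerivAt (fun w => (f w : ℂ)) (Complex.ofRealCLM.comp (fderiv ℝ f z)) z :=
    Complex.ofRealCLM.hasFDerivAt.comp z hf.hasFDerivAt
  simp [dbar, hcomp.fderiv, h]

lemma exists_contDiff_separating (hX : IsCompact X) (hR : IsCompact R) (hd : Disjoint X R) :
    ∃ f : ℂ → ℝ, ContDiff ℝ 1 f ∧ HasCompactSupport f ∧ (∀ z, f z ∈ Icc 0 1) ∧
      EqOn f 0 X ∧ EqOn f 1 R := by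
  obtain ⟨r, hr⟩ := hR.isBounded.subset_ball 0
  have hdisj : Disjoint (X ∪ (Metric.ball 0 r)ᶜ) R :=
    disjoint_union_left.2 ⟨hd, disjoint_compl_left_iff_subset.2 hr⟩
  obtain ⟨f, hf0, hf1, hf⟩ := exists_contMDiffMap_zero_one_of_isClosed (modelWithCornersSelf ℝ ℂ)
    (n := 1) (hX.isClosed.union Metric.isOpen_ball.isClosed_compl) hR.isClosed hdisj
  refine ⟨f, f.contMDiff.contDiff, ?_, hf, hf0.mono subset_union_left, hf1⟩
  exact .intro (isCompact_closedBall (0 : ℂ) r) fun z hz =>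
    hf0 (Or.inr fun h => hz (Metric.ball_subset_closedBall h))

lemma exists_differentiableOn_separating (hK : IsCompact K) (hKU : K ⊆ U) (h : HoleFree U K)
    (hX : IsCompact X) (hR : IsCompact R) (hXK : X ⊆ K) (hRK : R ⊆ K) (hd : Disjoint X R)
    (hnull : volume (K \ (X ∪ R)) = 0) {ε : ℝ} (hε : 0 < ε) :
    ∃ c : ℂ → ℂ, DifferentiableOn ℂ c U ∧ (∀ z ∈ X, ‖c z‖ < ε) ∧ (∀ z ∈ R, ‖c z - 1‖ < ε) ∧
      ∀ z ∈ K, -ε < (c z).re := by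
  obtain ⟨f, hf, hfc, hf01, hf0, hf1⟩ := exists_contDiff_separating hX hR hd
  have hcrit (z : ℂ) (hz : z ∈ X ∪ R) : dbar (fun w => (f w : ℂ)) z = 0 := by
    refine dbar_ofReal_eq_zero (hf.differentiable one_ne_zero z) ?_
    rcases hz with hz | hz
    · exact IsLocalMin.fderiv_eq_zero (Eventually.of_forall fun w => hf0 hz ▸ (hf01 w).1)
    · exact IsLocalMax.fderiv_eq_zero (Eventually.of_forall fun w => hf1 hz ▸ (hf01 w).2)
  have hae : ∀ᵐ ζ, ζ ∈ K → dbar (fun w => (f w : ℂ)) ζ = 0 := by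
    filter_upwards [measure_eq_zero_iff_ae_notMem.1 hnull] with ζ hζ hζK
    exact hcrit ζ (not_not.1 fun hXR => hζ ⟨hζK, hXR⟩)
  obtain ⟨c, hc, hcf⟩ := exists_differentiableOn_norm_sub_lt hK hKU h
    (Complex.ofRealCLM.contDiff.comp hf) (hfc.comp_left (g := Complex.ofReal) rfl) hae hε
  refine ⟨c, hc, fun z hz => ?_, fun z hz => ?_, fun z hz => ?_⟩
  · simpa [hf0 hz] using hcf z (hXK hz)
  · simpa [hf1 hz] using hcf z (hRK hz)
  · have hre := (abs_lt.1 ((Complex.abs_re_le_norm _).trans_lt (hcf z hz))).1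
    simp only [Complex.sub_re, Complex.ofRealCLM_apply, Function.comp_apply,
      Complex.ofReal_re] at hre
    linarith [(hf01 z).1]

lemma exists_correction (hK : IsCompact K) (hKU : K ⊆ U) (h : HoleFree U K) (hX : IsCompact X)
    (hR : IsCompact R) (hXK : X ⊆ K) (hRK : R ⊆ K) (hd : Disjoint X R)
    (hnull : volume (K \ (X ∪ R)) = 0) {l : ℂ → ℝ} (hl : ContinuousOn l U) {f : ℂ → ℂ}
    (hf : DifferentiableOn ℂ f U) {ε : ℝ} (hε : 0 < ε) :
    ∃ f' : ℂ → ℂ, DifferentiableOn ℂ f' U ∧ (∀ z ∈ X, ‖f' z - f z‖ < ε) ∧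
      (∀ z ∈ K, (f z).re - ε < (f' z).re) ∧ ∀ z ∈ R, l z < (f' z).re := by
  have hRU := hRK.trans hKU
  obtain ⟨M, hM⟩ := hR.bddAbove_image
    ((hl.mono hRU).sub (Complex.continuous_re.comp_continuousOn (hf.continuousOn.mono hRU)))
  set m := max M 0 + ε
  have hm : 0 < m := by positivity
  obtain ⟨c, hc, hcX, hcR, hcK⟩ := exists_differentiableOn_separating hK hKU h hX hR hXK hRK hd
    hnull (div_pos hε hm)
  refine ⟨fun z => f z + m * c z, hf.add (hc.const_mul _), fun z hz => ?_, fun z hz => ?_,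
    fun z hz => ?_⟩
  · rw [add_sub_cancel_left, norm_mul, Complex.norm_real, Real.norm_of_nonneg hm.le, mul_comm]
    exact (lt_div_iff₀ hm).1 (hcX z hz)
  · have hre := hcK z hz
    rw [← neg_div, div_lt_iff₀ hm] at hre
    simp only [Complex.add_re, Complex.re_ofReal_mul]
    linarith
  · have hre := (abs_lt.1 ((Complex.abs_re_le_norm _).trans_lt (hcR z hz))).1
    rw [← neg_div, div_lt_iff₀ hm, Complex.sub_re, Complex.one_re] at hre
    have hlM : l z - (f z).re ≤ M := hM (mem_image_of_mem _ hz)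
    simp only [Complex.add_re, Complex.re_ofReal_mul]
    linarith [le_max_left M 0]

lemma exists_pos_forall_lt_of_norm_sub_lt {α E : Type*} [TopologicalSpace α]
    [SeminormedAddCommGroup E] {ρ : E → ℝ} (hρ : LipschitzWith 1 ρ) {K : Set α} (hK : IsCompact K)
    {l : α → ℝ} (hl : ContinuousOn l K) {h : α → E} (hh : ContinuousOn h K)
    (hlt : ∀ z ∈ K, l z < ρ (h z)) :
    ∃ ε > 0, ∀ h' : α → E, ∀ z ∈ K, ‖h' z - h z‖ < ε → l z < ρ (h' z) := by
  obtain ⟨ε, hε, hgap⟩ := hK.exists_forall_le' ((hρ.continuous.comp_continuousOn hh).sub hl)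
    (a := 0) fun z hz => sub_pos.2 (hlt z hz)
  refine ⟨ε, hε, fun h' z hz hclose => ?_⟩
  have hdist := hρ.dist_le_mul (h' z) (h z)
  rw [NNReal.coe_one, one_mul, dist_eq_norm, dist_eq_norm, Real.norm_eq_abs] at hdist
  have hgapz : ε ≤ ρ (h z) - l z := hgap z hz
  linarith [(abs_le.1 hdist).1]

end Correction

section UnitSquare

lemma exists_closed_cover_finite_inter {A B : Set ℝ} (hA : IsCompact A) (hB : IsClosed B)
    (hd : Disjoint A B) :
    ∃ P Q : Set ℝ, IsClosed P ∧ IsClosed Q ∧ P ∪ Q = univ ∧ (P ∩ Q).Finite ∧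
      Disjoint A P ∧ Disjoint B Q := by
  obtain ⟨δ, hδ, hdδ⟩ := hd.exists_cthickenings hA hB
  obtain ⟨t, htA, ht, hcover⟩ := hA.finite_cover_balls hδ
  refine ⟨(⋃ a ∈ t, Metric.ball a δ)ᶜ, ⋃ a ∈ t, Metric.closedBall a δ,
    (isOpen_biUnion fun a _ => Metric.isOpen_ball).isClosed_compl,
    ht.isClosed_biUnion fun a _ => Metric.isClosed_closedBall, ?_, ?_,
    disjoint_compl_right_iff_subset.2 hcover, ?_⟩
  · refine eq_univ_of_forall fun x => or_iff_not_imp_left.2 fun hx => ?_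
    exact iUnion₂_mono (fun a _ => Metric.ball_subset_closedBall) (not_not.1 hx)
  · refine (ht.biUnion fun a _ => (toFinite {a - δ, a + δ})).subset ?_
    rintro x ⟨hxP, hxQ⟩
    simp only [mem_compl_iff, mem_iUnion, not_exists] at hxP hxQ
    obtain ⟨a, ha, hxa⟩ := hxQ
    rw [mem_iUnion₂]
    refine ⟨a, ha, ?_⟩
    rw [← Real.sphere_eq_pair a hδ.le]
    exact (Metric.mem_closedBall.1 hxa).antisymm (not_lt.1 (hxP a ha))
  · rw [disjoint_iUnion₂_right]
    exact fun a ha => hdδ.symm.mono (Metric.self_subset_cthickening B)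
      (Metric.closedBall_subset_cthickening (htA ha) δ)

/-- Closed sets `P` and `Q` covering the line and a finite set `Z` of nodes, among them `0` and `1`,
such that `P` and `Q` only overlap at nodes. -/
structure IsFibreCover (Z P Q : Set ℝ) : Prop where
  finite : Z.Finite
  endpoints_subset : {0, 1} ⊆ Z
  isClosed_left : IsClosed P
  isClosed_right : IsClosed Q
  union_eq_univ : P ∪ Q = univ
  inter_subset : P ∩ Q ⊆ Z

namespace IsFibreCover

variable {Z P Q : Set ℝ} (hcov : IsFibreCover Z P Q)

include hcov

lemma symm : IsFibreCover Z Q P where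
  __ := hcov
  isClosed_left := hcov.isClosed_right
  isClosed_right := hcov.isClosed_left
  union_eq_univ := union_comm P Q ▸ hcov.union_eq_univ
  inter_subset := inter_comm P Q ▸ hcov.inter_subset

lemma isClosed : IsClosed Z :=
  hcov.finite.isClosed

lemma nonempty : Z.Nonempty :=
  ⟨0, hcov.endpoints_subset (mem_insert 0 _)⟩

lemma mem_or_mem (t : ℝ) : t ∈ P ∨ t ∈ Q :=
  (hcov.union_eq_univ ▸ mem_univ t : t ∈ P ∪ Q)

lemma ball_infDist_subset {t : ℝ} (ht : t ∈ Icc 0 1) (htQ : t ∉ Q) :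
    Metric.ball t (Metric.infDist t Z) ⊆ Icc 0 1 \ Q := by
  intro x hx
  refine ⟨?_, fun hxQ => ?_⟩
  · have h0 := Metric.infDist_le_dist_of_mem (x := t) (hcov.endpoints_subset (mem_insert 0 _))
    have h1 := Metric.infDist_le_dist_of_mem (x := t)
      (hcov.endpoints_subset (mem_insert_of_mem 0 rfl))
    rw [Real.dist_eq, sub_zero, abs_of_nonneg ht.1] at h0
    rw [Real.dist_eq, abs_of_nonpos (sub_nonpos.2 ht.2)] at h1
    rw [Metric.mem_ball, Real.dist_eq, abs_lt] at hx
    constructor <;> linarith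
  · obtain ⟨y, hy, hyPQ⟩ := isPreconnected_closed_iff.1
      (convex_ball t (Metric.infDist t Z)).isPreconnected P Q hcov.isClosed_left
      hcov.isClosed_right (hcov.union_eq_univ ▸ subset_univ _)
      ⟨t, Metric.mem_ball_self (Metric.pos_of_mem_ball hx), (hcov.mem_or_mem t).resolve_right htQ⟩
      ⟨x, hx, hxQ⟩
    exact Metric.disjoint_ball_infDist.le_bot ⟨hy, hcov.inter_subset hyPQ⟩

end IsFibreCover

lemma exists_isFibreCover {A B : Set ℝ} (hA : IsCompact A) (hB : IsClosed B)
    (hd : Disjoint A B) : ∃ Z P Q, IsFibreCover Z P Q ∧ Disjoint A P ∧ Disjoint B Q := by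
  obtain ⟨P, Q, hP, hQ, hPQ, hfin, hAP, hBQ⟩ := exists_closed_cover_finite_inter hA hB hd
  exact ⟨{0, 1} ∪ P ∩ Q, P, Q, ⟨(toFinite _).union hfin, subset_union_left, hP, hQ, hPQ,
    subset_union_right⟩, hAP, hBQ⟩

/-- The base of the unit square together with the vertical fibres over `Z`. -/
def frame (Z : Set ℝ) : Set (ℝ × ℝ) :=
  {p ∈ Icc 0 1 | p.2 = 0 ∨ p.1 ∈ Z}

/-- The part of the unit square lying over `P`. -/
def strip (P : Set ℝ) : Set (ℝ × ℝ) :=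
  {p ∈ Icc 0 1 | p.1 ∈ P}

/-- How deep a point of the unit square lies inside the complement of `frame Z`. -/
noncomputable def depth (Z : Set ℝ) (p : ℝ × ℝ) : ℝ :=
  min p.2 (Metric.infDist p.1 Z)

/-- The part of the strip over `P` at depth at least `η`. -/
def core (Z P : Set ℝ) (η : ℝ) : Set (ℝ × ℝ) :=
  {p ∈ strip P | η ≤ depth Z p}

/-- Every point of the unit square outside `E` can be joined to the top edge outside `E`. -/
def ReachesTop (E : Set (ℝ × ℝ)) : Prop :=
  ∀ p ∈ Icc 0 1 \ E, ∃ t : ℝ, (t, 1) ∈ connectedComponentIn (Icc 0 1 \ E) p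

variable {Z P Q : Set ℝ} {η : ℝ}

lemma continuous_depth (Z : Set ℝ) : Continuous (depth Z) :=
  continuous_snd.min ((Metric.continuous_infDist_pt Z).comp continuous_fst)

lemma isCompact_frame (hZ : IsClosed Z) : IsCompact (frame Z) :=
  isCompact_Icc.inter_right <|
    (isClosed_eq continuous_snd continuous_const).union (hZ.preimage continuous_fst)

lemma isCompact_strip (hP : IsClosed P) : IsCompact (strip P) :=
  isCompact_Icc.inter_right (hP.preimage continuous_fst)

lemma isCompact_core (Z : Set ℝ) (hP : IsClosed P) (η : ℝ) : IsCompact (core Z P η) :=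
  (isCompact_strip hP).inter_right (isClosed_le continuous_const (continuous_depth Z))

lemma depth_pos (hZ : IsClosed Z) (hZne : Z.Nonempty) {p : ℝ × ℝ} (hp : p ∈ Icc 0 1)
    (hpZ : p ∉ frame Z) : 0 < depth Z p := by
  have hfree : p.2 ≠ 0 ∧ p.1 ∉ Z := not_or.1 fun h => hpZ ⟨hp, h⟩
  exact lt_min (lt_of_le_of_ne hp.1.2 hfree.1.symm)
    ((hZ.notMem_iff_infDist_pos hZne).1 hfree.2)

lemma depth_nonneg {p : ℝ × ℝ} (hp : p ∈ Icc 0 1) : 0 ≤ depth Z p :=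
  le_min hp.1.2 Metric.infDist_nonneg

lemma depth_eq_zero {p : ℝ × ℝ} (hp : p ∈ frame Z) : depth Z p = 0 := by
  refine le_antisymm ?_ (depth_nonneg hp.1)
  rcases hp.2 with h | h
  · exact (min_le_left _ _).trans_eq h
  · exact (min_le_right _ _).trans_eq (Metric.infDist_zero_of_mem h)

lemma exists_mem_connectedComponentIn_of_rise {E : Set (ℝ × ℝ)} {t s : ℝ}
    (hts : (t, s) ∈ Icc (0 : ℝ × ℝ) 1) (hrise : ∀ s' ∈ Icc s 1, (t, s') ∉ E) :
    (t, 1) ∈ connectedComponentIn (Icc 0 1 \ E) (t, s) := by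
  have hsub : (fun s' => (t, s')) '' Icc s 1 ⊆ Icc 0 1 \ E := by
    rintro _ ⟨s', hs', rfl⟩
    exact ⟨⟨⟨hts.1.1, hts.1.2.trans hs'.1⟩, hts.2.1, hs'.2⟩, hrise s' hs'⟩
  have hpre : IsPreconnected ((fun s' => (t, s')) '' Icc s 1) :=
    isPreconnected_Icc.image _ (by fun_prop)
  exact hpre.subset_connectedComponentIn ⟨s, ⟨le_rfl, hts.2.2⟩, rfl⟩ hsub
    ⟨1, ⟨hts.2.2, le_rfl⟩, rfl⟩

lemma reachesTop_frame (Z : Set ℝ) : ReachesTop (frame Z) := by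
  rintro ⟨t, s⟩ ⟨hts, hfree⟩
  refine ⟨t, exists_mem_connectedComponentIn_of_rise hts fun s' hs' hmem => hfree ⟨hts, ?_⟩⟩
  exact hmem.2.imp_left fun (h : s' = 0) => le_antisymm (hs'.1.trans_eq h) hts.1.2

lemma exists_mem_ball_infDist_lt (hZ : IsClosed Z) (hZne : Z.Nonempty) (hη : 0 < η) {t : ℝ}
    (ht : t ∉ Z) : ∃ t' ∈ Metric.ball t (Metric.infDist t Z), Metric.infDist t' Z < η := by
  obtain ⟨z, hzZ, hz⟩ := hZ.exists_infDist_eq_dist hZne t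
  have hr : Metric.infDist t Z ≠ 0 := ((hZ.notMem_iff_infDist_pos hZne).1 ht).ne'
  have hzcl : z ∈ closure (Metric.ball t (Metric.infDist t Z)) := by
    rw [closure_ball t hr, Metric.mem_closedBall, hz, dist_comm]
  obtain ⟨t', ht', hzt'⟩ := Metric.mem_closure_iff.1 hzcl η hη
  exact ⟨t', ht', (Metric.infDist_le_dist_of_mem hzZ).trans_lt (dist_comm z t' ▸ hzt')⟩

-- A point below the core slides sideways, towards `Z` but inside its gap, until it can rise past
-- the core.
lemma reachesTop_frame_union_strip_union_core (hcov : IsFibreCover Z P Q) (hη : 0 < η) :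
    ReachesTop (frame Z ∪ strip Q ∪ core Z P η) := by
  rintro ⟨t, s⟩ ⟨hts, hfree⟩
  simp only [mem_union, not_or] at hfree
  obtain ⟨⟨hframe, hstrip⟩, hcore⟩ := hfree
  have hs : 0 < s ∧ t ∉ Z := ⟨lt_of_le_of_ne hts.1.2 fun h => hframe ⟨hts, Or.inl h.symm⟩,
    fun h => hframe ⟨hts, Or.inr h⟩⟩
  have htQ : t ∉ Q := fun h => hstrip ⟨hts, h⟩
  have htP : t ∈ P := (hcov.mem_or_mem t).resolve_right htQ
  set J := Metric.ball t (Metric.infDist t Z)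
  have hJ : J ⊆ Icc 0 1 \ Q :=
    hcov.ball_infDist_subset ⟨hts.1.1, hts.2.1⟩ htQ
  have hfree_of_mem {t' s' : ℝ} (ht' : t' ∈ J) (hs' : 0 < s')
      (hshallow : s' < η ∨ Metric.infDist t' Z < η) :
      (t', s') ∉ frame Z ∪ strip Q ∪ core Z P η := by
    rintro ((hmem | hmem) | hmem)
    · exact hmem.2.elim hs'.ne' fun h => Metric.disjoint_ball_infDist.le_bot ⟨ht', h⟩
    · exact (hJ ht').2 hmem.2
    · exact (min_lt_iff.2 hshallow).not_ge hmem.2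
  have htJ : t ∈ J := Metric.mem_ball_self
    ((hcov.isClosed.notMem_iff_infDist_pos hcov.nonempty).1 hs.2)
  by_cases hshallow : Metric.infDist t Z < η
  · exact ⟨t, exists_mem_connectedComponentIn_of_rise hts fun s' hs' =>
      hfree_of_mem htJ (hs.1.trans_le hs'.1) (Or.inr hshallow)⟩
  · have hsη : s < η := not_le.1 fun h => hcore ⟨⟨hts, htP⟩, le_min h (not_lt.1 hshallow)⟩
    obtain ⟨t', ht'J, ht'⟩ := exists_mem_ball_infDist_lt hcov.isClosed hcov.nonempty hη hs.2
    have hslide : (t', s) ∈ connectedComponentIn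
        (Icc 0 1 \ (frame Z ∪ strip Q ∪ core Z P η)) (t, s) := by
      have hpre : IsPreconnected ((fun t' => (t', s)) '' J) :=
        (convex_ball t _).isPreconnected.image _ (by fun_prop)
      refine hpre.subset_connectedComponentIn ⟨t, htJ, rfl⟩ ?_ ⟨t', ht'J, rfl⟩
      rintro _ ⟨x, hx, rfl⟩
      exact ⟨⟨⟨(hJ hx).1.1, hts.1.2⟩, (hJ hx).1.2, hts.2.2⟩, hfree_of_mem hx hs.1 (Or.inl hsη)⟩
    refine ⟨t', connectedComponentIn_eq hslide ▸ exists_mem_connectedComponentIn_of_rise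
      ⟨⟨(hJ ht'J).1.1, hts.1.2⟩, (hJ ht'J).1.2, hts.2.2⟩ fun s' hs' => ?_⟩
    exact hfree_of_mem ht'J (hs.1.trans_le hs'.1) (Or.inr ht')

lemma exists_pos_lt_of_depth_le (hZ : IsClosed Z) (hZne : Z.Nonempty) (hP : IsClosed P)
    {f g : ℝ × ℝ → ℝ} (hf : ContinuousOn f (strip P)) (hg : ContinuousOn g (strip P))
    (h : ∀ p ∈ strip P, p ∈ frame Z → f p < g p) :
    ∃ η > 0, ∀ p ∈ strip P, depth Z p ≤ η → f p < g p := by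
  have hbad : IsCompact {p ∈ strip P | g p ≤ f p} :=
    (isCompact_strip hP).of_isClosed_subset ((isCompact_strip hP).isClosed.isClosed_le hg hf)
      (sep_subset _ _)
  obtain ⟨η, hη, hbadη⟩ := hbad.exists_forall_le' (continuous_depth Z).continuousOn fun p hp =>
    depth_pos hZ hZne hp.1.1 fun hframe => (h p hp.1 hframe).not_ge hp.2
  refine ⟨η / 2, half_pos hη, fun p hp hdepth => not_le.1 fun hle => ?_⟩
  linarith [hbadη p ⟨hp, hle⟩]

end UnitSquare

section Attaching

variable {U X S Y : Set ℂ} {Z P Q : Set ℝ} {l : ℂ → ℝ} {f : ℂ → ℂ} {ε : ℝ}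

lemma exists_raise_on_null (hX : IsCompact X) (hS : IsCompact S) (hXSU : X ∪ S ⊆ U)
    (h : HoleFree U (X ∪ S)) (hnull : volume S = 0) (hY : IsCompact Y) (hYS : Y ⊆ S)
    (hl : ContinuousOn l U) (hf : DifferentiableOn ℂ f U) (hlt : ∀ z ∈ X ∩ Y, l z < (f z).re)
    (hε : 0 < ε) :
    ∃ f' : ℂ → ℂ, DifferentiableOn ℂ f' U ∧ (∀ z ∈ X, ‖f' z - f z‖ < ε) ∧
      ∀ z ∈ Y, l z < (f' z).re := by
  have hYU : Y ⊆ U := (hYS.trans subset_union_right).trans hXSU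
  have hre : ContinuousOn (fun z => (f z).re - l z) Y :=
    (Complex.continuous_re.comp_continuousOn (hf.continuousOn.mono hYU)).sub (hl.mono hYU)
  obtain ⟨σ, hσ, hgap⟩ := (hX.inter hY).exists_forall_le' (hre.mono inter_subset_right) (a := 0)
    fun z hz => sub_pos.2 (hlt z hz)
  set R := {z ∈ Y | (f z).re - l z ≤ σ / 2}
  have hRY : R ⊆ Y := sep_subset _ _
  have hR : IsCompact R :=
    hY.of_isClosed_subset (hY.isClosed.isClosed_le hre continuousOn_const) hRY
  have hdisj : Disjoint X R := disjoint_left.2 fun z hzX hzR => by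
    linarith [hgap z ⟨hzX, hRY hzR⟩, hzR.2]
  obtain ⟨f', hf', hclose, hdrop, hraise⟩ := exists_correction (hX.union hS) hXSU h hX hR
    subset_union_left ((hRY.trans hYS).trans subset_union_right) hdisj
    (measure_mono_null (by grind) hnull) hl hf (lt_min hε (half_pos hσ))
  refine ⟨f', hf', fun z hz => (hclose z hz).trans_le (min_le_left _ _), fun z hz => ?_⟩
  by_cases hzR : z ∈ R
  · exact hraise z hzR
  · have hlarge : σ / 2 < (f z).re - l z := not_le.1 fun hle => hzR ⟨hz, hle⟩
    linarith [hdrop z (Or.inr (hYS hz)), min_le_right ε (σ / 2)]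

/-- A cell in the plane swept out by fibres running from the base, the image of the bottom edge of
the unit square, to the image of the top edge, which lies on the boundary of the cell. The two
outermost fibres are allowed to degenerate. -/
structure FoliatedCell where
  param : ℝ × ℝ → ℂ
  continuous_param : Continuous param
  eq_of_param_eq : ∀ p ∈ Icc 0 1, ∀ p' ∈ Icc 0 1, p.1 ∈ Ioo 0 1 → param p = param p' → p = p'
  top_mem_closure : ∀ t ∈ Icc (0 : ℝ) 1, param (t, 1) ∈ closure (param '' Icc 0 1)ᶜ
  volume_base : volume ((fun t => param (t, 0)) '' Icc 0 1) = 0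
  volume_fibre : ∀ t, volume ((fun s => param (t, s)) '' Icc 0 1) = 0

namespace FoliatedCell

variable (T : FoliatedCell)

/-- The set of points of a cell. -/
def carrier : Set ℂ :=
  T.param '' Icc 0 1

/-- The set `X` touches the cell only at points of the base; a fibre may run through such a point
only if it does not leave it. -/
def AttachedTo (X : Set ℂ) : Prop :=
  ∀ p ∈ Icc 0 1, T.param p ∈ X → T.param p = T.param (p.1, 0)

variable {T}

lemma isCompact_image {E : Set (ℝ × ℝ)} (hE : IsCompact E) : IsCompact (T.param '' E) :=
  hE.image T.continuous_param

lemma image_frame_subset (Z : Set ℝ) : T.param '' frame Z ⊆ T.carrier :=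
  image_mono (sep_subset _ _)

lemma image_strip_subset (P : Set ℝ) : T.param '' strip P ⊆ T.carrier :=
  image_mono (sep_subset _ _)

lemma volume_image_frame (hZ : Z.Finite) : volume (T.param '' frame Z) = 0 := by
  refine measure_mono_null ?_ (measure_union_null T.volume_base
    ((measure_biUnion_null_iff hZ.countable).2 fun t _ => T.volume_fibre t))
  rintro _ ⟨⟨t, s⟩, ⟨hts, rfl | htZ⟩, rfl⟩
  · exact Or.inl ⟨t, ⟨hts.1.1, hts.2.1⟩, rfl⟩
  · exact Or.inr (mem_biUnion htZ ⟨s, ⟨hts.1.2, hts.2.2⟩, rfl⟩)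

lemma fst_mem_Ioo_of_notMem_frame (hZ : {0, 1} ⊆ Z) {p : ℝ × ℝ} (hp : p ∈ Icc 0 1)
    (hpZ : p ∉ frame Z) : p.1 ∈ Ioo 0 1 :=
  ⟨lt_of_le_of_ne hp.1.1 fun h => hpZ ⟨hp, Or.inr (hZ (Or.inl h.symm))⟩,
    lt_of_le_of_ne hp.2.1 fun h => hpZ ⟨hp, Or.inr (hZ (Or.inr h))⟩⟩

lemma param_notMem_of_notMem_frame (hT : T.AttachedTo X) (hZ : {0, 1} ⊆ Z) {p : ℝ × ℝ}
    (hp : p ∈ Icc 0 1) (hpZ : p ∉ frame Z) : T.param p ∉ X := by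
  intro hpX
  have hbase := T.eq_of_param_eq p hp (p.1, 0) ⟨⟨hp.1.1, le_rfl⟩, hp.2.1, zero_le_one⟩
    (fst_mem_Ioo_of_notMem_frame hZ hp hpZ) (hT p hp hpX)
  exact hpZ ⟨hp, Or.inl (congrArg Prod.snd hbase)⟩

lemma holeFree_union_image (hX : IsClosed X) (hhole : HoleFree U (X ∪ T.carrier))
    (hT : T.AttachedTo X) (hZ : {0, 1} ⊆ Z) {E : Set (ℝ × ℝ)} (hE : IsCompact E)
    (hE01 : E ⊆ Icc 0 1) (hZE : frame Z ⊆ E) (htop : ReachesTop E) :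
    HoleFree U (X ∪ T.param '' E) := by
  refine hhole.of_subset (union_subset_union_right X (image_mono hE01)) fun b hb hbK => ?_
  obtain ⟨p, hp, rfl⟩ := hb.resolve_left fun h => hbK (Or.inl h)
  have hpE : p ∈ Icc 0 1 \ E := ⟨hp, fun h => hbK (Or.inr (mem_image_of_mem _ h))⟩
  have himage : T.param '' (Icc 0 1 \ E) ⊆ (X ∪ T.param '' E)ᶜ := by
    rintro _ ⟨q, ⟨hq, hqE⟩, rfl⟩
    have hqZ : q ∉ frame Z := fun h => hqE (hZE h)
    rintro (hqX | ⟨q', hq', heq⟩)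
    · exact param_notMem_of_notMem_frame hT hZ hq hqZ hqX
    · exact hqE (T.eq_of_param_eq q hq q' (hE01 hq') (fst_mem_Ioo_of_notMem_frame hZ hq hqZ)
        heq.symm ▸ hq')
  obtain ⟨t, ht⟩ := htop p hpE
  have htC : T.param (t, 1) ∈ connectedComponentIn (X ∪ T.param '' E)ᶜ (T.param p) :=
    (isPreconnected_connectedComponentIn.image _
      T.continuous_param.continuousOn).subset_connectedComponentIn
      (mem_image_of_mem _ (mem_connectedComponentIn hpE))
      ((image_mono (connectedComponentIn_subset _ _)).trans himage) (mem_image_of_mem _ ht)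
  have ht01 := (connectedComponentIn_subset _ _ ht).1
  obtain ⟨e, heC, heT⟩ := mem_closure_iff.1 (T.top_mem_closure t ⟨ht01.1.1, ht01.2.1⟩) _
    (hX.union (isCompact_image hE).isClosed).isOpen_compl.connectedComponentIn htC
  refine ⟨e, fun he => ?_, heC⟩
  exact he.elim (fun heX => connectedComponentIn_subset _ _ heC (Or.inl heX)) heT

lemma exists_raise_on_frame (hX : IsCompact X) (hU : X ∪ T.carrier ⊆ U)
    (hhole : HoleFree U (X ∪ T.carrier)) (hT : T.AttachedTo X) (hcov : IsFibreCover Z P Q)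
    (hl : ContinuousOn l U) (hf : DifferentiableOn ℂ f U)
    (hbase : ∀ t ∈ Icc 0 1, t ∈ P → T.param (t, 0) ∈ X →
      l (T.param (t, 0)) < (f (T.param (t, 0))).re) (hε : 0 < ε) :
    ∃ f' : ℂ → ℂ, DifferentiableOn ℂ f' U ∧ (∀ z ∈ X, ‖f' z - f z‖ < ε) ∧
      ∀ p ∈ strip P, p ∈ frame Z → l (T.param p) < (f' (T.param p)).re := by
  have hframe := isCompact_frame hcov.isClosed
  have hlt : ∀ z ∈ X ∩ T.param '' (frame Z ∩ strip P), l z < (f z).re := by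
    rintro _ ⟨hpX, p, ⟨-, hp, hpP⟩, rfl⟩
    have hpbase := hT p hp hpX
    rw [hpbase] at hpX ⊢
    exact hbase p.1 ⟨hp.1.1, hp.2.1⟩ hpP hpX
  obtain ⟨f', hf', hclose, hraise⟩ := exists_raise_on_null hX (isCompact_image hframe)
    ((union_subset_union_right X (image_frame_subset Z)).trans hU)
    (holeFree_union_image hX.isClosed hhole hT hcov.endpoints_subset hframe (sep_subset _ _)
      subset_rfl (reachesTop_frame Z))
    (volume_image_frame hcov.finite)
    (isCompact_image (hframe.inter (isCompact_strip hcov.isClosed_left)))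
    (image_mono inter_subset_left) hl hf hlt hε
  exact ⟨f', hf', hclose, fun p hpP hpZ => hraise _ ⟨p, ⟨hpZ, hpP⟩, rfl⟩⟩

lemma disjoint_union_image_strip_image_core (hT : T.AttachedTo X) (hcov : IsFibreCover Z P Q)
    {η : ℝ} (hη : 0 < η) : Disjoint (X ∪ T.param '' strip Q) (T.param '' core Z P η) := by
  rw [disjoint_right]
  rintro _ ⟨p, ⟨⟨hp, hpP⟩, hdepth⟩, rfl⟩
  have hpZ : p ∉ frame Z := fun h => (hη.trans_le hdepth).ne' (depth_eq_zero h)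
  rintro (hpX | ⟨q, ⟨hq, hqQ⟩, heq⟩)
  · exact param_notMem_of_notMem_frame hT hcov.endpoints_subset hp hpZ hpX
  · have hpq := T.eq_of_param_eq p hp q hq
      (fst_mem_Ioo_of_notMem_frame hcov.endpoints_subset hp hpZ) heq.symm
    exact hpZ ⟨hp, Or.inr (hcov.inter_subset ⟨hpP, hpq ▸ hqQ⟩)⟩

lemma exists_raise_on_core (hX : IsCompact X) (hU : X ∪ T.carrier ⊆ U)
    (hhole : HoleFree U (X ∪ T.carrier)) (hT : T.AttachedTo X) (hcov : IsFibreCover Z P Q)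
    {η : ℝ} (hη : 0 < η) (hl : ContinuousOn l U) (hf : DifferentiableOn ℂ f U) (hε : 0 < ε) :
    ∃ f' : ℂ → ℂ, DifferentiableOn ℂ f' U ∧
      (∀ z ∈ X ∪ T.param '' strip Q, ‖f' z - f z‖ < ε) ∧
      ∀ p ∈ core Z P η, l (T.param p) < (f' (T.param p)).re := by
  set E := frame Z ∪ strip Q ∪ core Z P η
  have hQ := isCompact_strip hcov.isClosed_right
  have hcore := isCompact_core Z hcov.isClosed_left η
  have hE : IsCompact E := ((isCompact_frame hcov.isClosed).union hQ).union hcore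
  have hE01 : E ⊆ Icc 0 1 :=
    union_subset (union_subset (sep_subset _ _) (sep_subset _ _))
      ((sep_subset _ _).trans (sep_subset _ _))
  have hnull : volume ((X ∪ T.param '' E) \ (X ∪ T.param '' strip Q ∪ T.param '' core Z P η)) = 0 :=
    measure_mono_null (by grind) (volume_image_frame (T := T) hcov.finite)
  obtain ⟨f', hf', hclose, -, hraise⟩ := exists_correction (hX.union (isCompact_image hE))
    ((union_subset_union_right X (image_mono hE01)).trans hU)
    (holeFree_union_image hX.isClosed hhole hT hcov.endpoints_subset hE hE01
      (subset_union_left.trans subset_union_left)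
      (reachesTop_frame_union_strip_union_core hcov hη))
    (hX.union (isCompact_image hQ)) (isCompact_image hcore)
    (union_subset_union_right X (image_mono (subset_union_right.trans subset_union_left)))
    ((image_mono subset_union_right).trans subset_union_right)
    (disjoint_union_image_strip_image_core hT hcov hη) hnull hl hf hε
  exact ⟨f', hf', hclose, fun p hp => hraise _ (mem_image_of_mem _ hp)⟩

lemma exists_raise (hX : IsCompact X) (hU : X ∪ T.carrier ⊆ U)
    (hhole : HoleFree U (X ∪ T.carrier)) (hT : T.AttachedTo X) (hcov : IsFibreCover Z P Q)
    (hl : ContinuousOn l U) (hf : DifferentiableOn ℂ f U)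
    (hbase : ∀ t ∈ Icc 0 1, t ∈ P → T.param (t, 0) ∈ X →
      l (T.param (t, 0)) < (f (T.param (t, 0))).re) (hε : 0 < ε) :
    ∃ η₀ > 0, ∀ η > 0, η ≤ η₀ → ∃ f' : ℂ → ℂ, DifferentiableOn ℂ f' U ∧
      (∀ z ∈ X, ‖f' z - f z‖ < ε) ∧
      (∀ p ∈ strip P, depth Z p ≤ η → l (T.param p) < (f' (T.param p)).re) ∧
      ∀ p ∈ core Z Q η, l (T.param p) < (f' (T.param p)).re := by
  obtain ⟨f₁, hf₁, hclose₁, hraise₁⟩ :=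
    exists_raise_on_frame hX hU hhole hT hcov hl hf hbase (half_pos hε)
  have hmaps : MapsTo T.param (strip P) U := fun p hp =>
    hU (Or.inr (image_strip_subset P (mem_image_of_mem _ hp)))
  have hlP : ContinuousOn (fun p => l (T.param p)) (strip P) :=
    hl.comp T.continuous_param.continuousOn hmaps
  have hfP : ContinuousOn (fun p => f₁ (T.param p)) (strip P) :=
    hf₁.continuousOn.comp T.continuous_param.continuousOn hmaps
  obtain ⟨η₀, hη₀, hshallow⟩ := exists_pos_lt_of_depth_le hcov.isClosed hcov.nonempty
    hcov.isClosed_left hlP (Complex.continuous_re.comp_continuousOn hfP) hraise₁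
  refine ⟨η₀, hη₀, fun η hη hηη₀ => ?_⟩
  have hcompact : IsCompact {p ∈ strip P | depth Z p ≤ η} :=
    (isCompact_strip hcov.isClosed_left).inter_right
      (isClosed_le (continuous_depth Z) continuous_const)
  obtain ⟨δ, hδ, hstable⟩ := exists_pos_forall_lt_of_norm_sub_lt
    (Complex.reCLM.lipschitz.weaken (by simp)) hcompact (hlP.mono (sep_subset _ _))
    (hfP.mono (sep_subset _ _)) fun p hp => hshallow p hp.1 (hp.2.trans hηη₀)
  obtain ⟨f₂, hf₂, hclose₂, hraise₂⟩ := exists_raise_on_core hX hU hhole hT hcov.symm hη hl hf₁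
    (lt_min (half_pos hε) hδ)
  refine ⟨f₂, hf₂, fun z hz => ?_, fun p hp hdepth => ?_, hraise₂⟩
  · linarith [norm_sub_le_norm_sub_add_norm_sub (f₂ z) (f₁ z) (f z), hclose₁ z hz,
      hclose₂ z (Or.inl hz), min_le_left (ε / 2) δ]
  · exact hstable (fun p => f₂ (T.param p)) p ⟨hp, hdepth⟩
      ((hclose₂ _ (Or.inr (mem_image_of_mem _ hp))).trans_le (min_le_right _ _))

end FoliatedCell

/-- The larger of the real parts of the two coordinates of a point of `ℂ × ℂ`. -/
noncomputable def maxRe (w : ℂ × ℂ) : ℝ :=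
  max w.1.re w.2.re

lemma lipschitzWith_maxRe : LipschitzWith 1 maxRe := by
  have hre : LipschitzWith 1 Complex.re := Complex.reCLM.lipschitz.weaken (by simp)
  simpa only [mul_one, max_self] using!
    (hre.comp LipschitzWith.prod_fst).max (hre.comp LipschitzWith.prod_snd)

/-- One of the real parts of the two coordinates of `H` exceeds `l` at each point of `X`. -/
def Dominates (l : ℂ → ℝ) (H : ℂ → ℂ × ℂ) (X : Set ℂ) : Prop :=
  ∀ z ∈ X, l z < maxRe (H z)

lemma FoliatedCell.exists_isFibreCover_of_dominates {T : FoliatedCell} {H : ℂ → ℂ × ℂ}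
    (hX : IsClosed X) (hTU : T.carrier ⊆ U) (hl : ContinuousOn l U)
    (hH : DifferentiableOn ℂ H U) (hdom : Dominates l H X) :
    ∃ Z P Q, IsFibreCover Z P Q ∧
      (∀ t ∈ Icc 0 1, t ∈ P → T.param (t, 0) ∈ X →
        l (T.param (t, 0)) < (H (T.param (t, 0))).1.re) ∧
      ∀ t ∈ Icc 0 1, t ∈ Q → T.param (t, 0) ∈ X →
        l (T.param (t, 0)) < (H (T.param (t, 0))).2.re := by
  have hbase : Continuous fun t : ℝ => T.param (t, 0) :=
    T.continuous_param.comp (by fun_prop)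
  have hmaps : MapsTo (fun t : ℝ => T.param (t, 0)) (Icc 0 1) U := fun t ht =>
    hTU ⟨(t, 0), ⟨⟨ht.1, le_rfl⟩, ht.2, zero_le_one⟩, rfl⟩
  have hbad {k : ℂ × ℂ → ℂ} (hk : Continuous k) : IsCompact {t ∈ Icc (0 : ℝ) 1 |
      T.param (t, 0) ∈ X ∧ (k (H (T.param (t, 0)))).re ≤ l (T.param (t, 0))} := by
    have hkH : ContinuousOn (fun t : ℝ => (k (H (T.param (t, 0)))).re) (Icc 0 1) :=
      (Complex.continuous_re.comp hk).comp_continuousOn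
        (hH.continuousOn.comp hbase.continuousOn hmaps)
    have hle : IsCompact {t ∈ Icc (0 : ℝ) 1 |
        (k (H (T.param (t, 0)))).re ≤ l (T.param (t, 0))} :=
      isCompact_Icc.of_isClosed_subset
        (isClosed_Icc.isClosed_le hkH (hl.comp hbase.continuousOn hmaps)) (sep_subset _ _)
    simpa only [inter_def, mem_ofPred_eq, mem_preimage, and_assoc, and_comm] using
      hle.inter_right (hX.preimage hbase)
  have hdisj : Disjoint {t ∈ Icc (0 : ℝ) 1 |
      T.param (t, 0) ∈ X ∧ (H (T.param (t, 0))).1.re ≤ l (T.param (t, 0))}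
      {t ∈ Icc (0 : ℝ) 1 |
        T.param (t, 0) ∈ X ∧ (H (T.param (t, 0))).2.re ≤ l (T.param (t, 0))} :=
    disjoint_left.2 fun t ⟨_, htX, h₁⟩ ⟨_, _, h₂⟩ => (hdom _ htX).not_ge (max_le h₁ h₂)
  obtain ⟨Z, P, Q, hcov, hP, hQ⟩ :=
    exists_isFibreCover (hbad continuous_fst) (hbad continuous_snd).isClosed hdisj
  exact ⟨Z, P, Q, hcov,
    fun t ht htP htX => not_le.1 fun hle => hP.le_bot ⟨⟨ht, htX, hle⟩, htP⟩,
    fun t ht htQ htX => not_le.1 fun hle => hQ.le_bot ⟨⟨ht, htX, hle⟩, htQ⟩⟩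

lemma exists_dominates_union {T : FoliatedCell} (hX : IsCompact X) (hU : X ∪ T.carrier ⊆ U)
    (hhole : HoleFree U (X ∪ T.carrier)) (hT : T.AttachedTo X) (hl : ContinuousOn l U)
    {H : ℂ → ℂ × ℂ} (hH : DifferentiableOn ℂ H U) (hdom : Dominates l H X) (hε : 0 < ε) :
    ∃ H' : ℂ → ℂ × ℂ, DifferentiableOn ℂ H' U ∧ (∀ z ∈ X, ‖H' z - H z‖ < ε) ∧
      Dominates l H' (X ∪ T.carrier) := by
  have hXU : X ⊆ U := subset_union_left.trans hU
  obtain ⟨Z, P, Q, hcov, hP, hQ⟩ := FoliatedCell.exists_isFibreCover_of_dominates hX.isClosed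
    (subset_union_right.trans hU) hl hH hdom
  obtain ⟨δ, hδ, hstable⟩ := exists_pos_forall_lt_of_norm_sub_lt lipschitzWith_maxRe hX
    (hl.mono hXU) (hH.continuousOn.mono hXU) hdom
  obtain ⟨η₁, hη₁, hF⟩ := T.exists_raise hX hU hhole hT hcov hl hH.fst hP (lt_min hε hδ)
  obtain ⟨η₂, hη₂, hG⟩ := T.exists_raise hX hU hhole hT hcov.symm hl hH.snd hQ (lt_min hε hδ)
  have hη := lt_min hη₁ hη₂
  obtain ⟨F, hFU, hFX, hFP, hFQ⟩ := hF _ hη (min_le_left _ _)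
  obtain ⟨G, hGU, hGX, hGQ, hGP⟩ := hG _ hη (min_le_right _ _)
  have hclose (z : ℂ) (hz : z ∈ X) : ‖(F z, G z) - H z‖ < min ε δ :=
    max_lt (hFX z hz) (hGX z hz)
  refine ⟨fun z => (F z, G z), hFU.prodMk hGU, fun z hz =>
    (hclose z hz).trans_le (min_le_left _ _), ?_⟩
  rintro _ (hz | ⟨p, hp, rfl⟩)
  · exact hstable (fun z => (F z, G z)) _ hz ((hclose _ hz).trans_le (min_le_right _ _))
  · rw [maxRe, lt_max_iff]
    rcases hcov.mem_or_mem p.1 with hpP | hpQ <;>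
      rcases le_total (depth Z p) (min η₁ η₂) with hdepth | hdepth
    · exact Or.inl (hFP p ⟨hp, hpP⟩ hdepth)
    · exact Or.inr (hGP p ⟨⟨hp, hpP⟩, hdepth⟩)
    · exact Or.inr (hGQ p ⟨hp, hpQ⟩ hdepth)
    · exact Or.inl (hFQ p ⟨⟨hp, hpQ⟩, hdepth⟩)

end Attaching

section SquareCell

lemma measure_setOf_linearMap_eq_zero {E : Type*} [NormedAddCommGroup E] [NormedSpace ℝ E]
    [MeasurableSpace E] [BorelSpace E] [FiniteDimensional ℝ E] (μ : Measure E)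
    [μ.IsAddHaarMeasure] {L : E →ₗ[ℝ] ℝ} (hL : L ≠ 0) (c : ℝ) : μ {z | L z = c} = 0 := by
  obtain ⟨w, hw⟩ : ∃ w, L w ≠ c := by
    by_contra! hconst
    exact hL (LinearMap.ext fun w => by
      rw [hconst w, ← hconst 0, map_zero, LinearMap.zero_apply])
  have hne : (AffineSubspace.mk' c ⊥).comap L.toAffineMap ≠ ⊤ := fun htop => hw <| by
    simpa [AffineSubspace.mem_mk', sub_eq_zero] using htop.ge (AffineSubspace.mem_top ℝ E w)
  convert Measure.addHaar_affineSubspace μ _ hne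
  ext z
  simp [AffineSubspace.mem_mk', sub_eq_zero]

/-- The square `[-1, 1]²`. -/
def unitCell : Set ℂ :=
  Icc (-1) 1 ×ℂ Icc (-1) 1

/-- The ray through `3i` and `τ + i` meets the union of the lateral and lower sides of `unitCell` at
`3i + ρ(τ - 2i)` with `ρ = baseScale τ`. -/
noncomputable def baseScale (τ : ℝ) : ℝ :=
  2 / max 1 (2 * |τ|)

/-- The parameter `ρ` along the ray through `3i` and `2t - 1 + i` of the point at height `s`, where
the base of `unitCell` has height `0` and its upper side has height `1`. -/
noncomputable def rayScale (p : ℝ × ℝ) : ℝ :=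
  AffineMap.lineMap (baseScale (2 * p.1 - 1)) 1 p.2

/-- The fibration of `unitCell` by its intersections with the rays from `3i`, each starting on the
lateral and lower sides and ending on the upper side. -/
noncomputable def squareParam (p : ℝ × ℝ) : ℂ :=
  ⟨rayScale p * (2 * p.1 - 1), 3 - 2 * rayScale p⟩

lemma continuous_squareParam : Continuous squareParam := by
  have hbase : Continuous baseScale :=
    continuous_const.div (by fun_prop) fun τ => (one_pos.trans_le (le_max_left _ _)).ne'
  have hray : Continuous rayScale :=
    (hbase.comp (by fun_prop)).lineMap continuous_const continuous_snd
  exact Complex.equivRealProdCLM.symm.continuous.comp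
    ((hray.mul (by fun_prop)).prodMk (continuous_const.sub (hray.const_mul 2)))

variable {τ ρ : ℝ}

lemma le_baseScale_iff (hρ : 0 ≤ ρ) : ρ ≤ baseScale τ ↔ ρ ≤ 2 ∧ |ρ * τ| ≤ 1 := by
  rw [baseScale, le_div_iff₀ (one_pos.trans_le (le_max_left _ _)), mul_max_of_nonneg _ _ hρ,
    max_le_iff, mul_one, abs_mul, abs_of_nonneg hρ]
  refine and_congr_right fun _ => ?_
  constructor <;> intro h <;> linarith

lemma one_le_baseScale (hτ : |τ| ≤ 1) : 1 ≤ baseScale τ :=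
  (le_baseScale_iff zero_le_one).2 ⟨one_le_two, by rwa [one_mul]⟩

lemma one_lt_baseScale (hτ : |τ| < 1) : 1 < baseScale τ := by
  rw [baseScale, one_lt_div (one_pos.trans_le (le_max_left _ _)), max_lt_iff]
  constructor <;> linarith

lemma abs_two_mul_sub_one_le_one {t : ℝ} (ht : t ∈ Icc 0 1) : |2 * t - 1| ≤ 1 :=
  abs_le.2 ⟨by linarith [ht.1], by linarith [ht.2]⟩

lemma rayScale_zero (t : ℝ) : rayScale (t, 0) = baseScale (2 * t - 1) :=
  AffineMap.lineMap_apply_zero _ _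

lemma rayScale_one (t : ℝ) : rayScale (t, 1) = 1 :=
  AffineMap.lineMap_apply_one _ _

lemma image_rayScale {t : ℝ} (ht : t ∈ Icc 0 1) :
    (fun s => rayScale (t, s)) '' Icc 0 1 = Icc 1 (baseScale (2 * t - 1)) := by
  rw [← segment_eq_Icc (one_le_baseScale (abs_two_mul_sub_one_le_one ht)), segment_symm,
    segment_eq_image_lineMap]
  rfl

lemma rayScale_mem {p : ℝ × ℝ} (hp : p ∈ Icc 0 1) :
    rayScale p ∈ Icc 1 (baseScale (2 * p.1 - 1)) :=
  image_rayScale (t := p.1) ⟨hp.1.1, hp.2.1⟩ ▸ mem_image_of_mem _ ⟨hp.1.2, hp.2.2⟩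

lemma image_squareParam : squareParam '' Icc 0 1 = unitCell := by
  refine Subset.antisymm ?_ fun w ⟨hre, him⟩ => ?_
  · rintro _ ⟨p, hp, rfl⟩
    have hρ := rayScale_mem hp
    obtain ⟨htwo, habs⟩ := (le_baseScale_iff (zero_le_one.trans hρ.1)).1 hρ.2
    have him : (squareParam p).im = 3 - 2 * rayScale p := rfl
    exact ⟨abs_le.1 habs, by linarith, by linarith [hρ.1]⟩
  · rw [mem_preimage, mem_Icc] at him
    set ρ := (3 - w.im) / 2 with hρ
    set τ := w.re / ρ with hτ
    have hρ1 : 1 ≤ ρ := by linarith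
    have hρ0 : 0 < ρ := one_pos.trans_le hρ1
    have hρτ : ρ * τ = w.re := mul_div_cancel₀ _ hρ0.ne'
    have hτ1 : |τ| ≤ 1 := by
      rw [hτ, abs_div, abs_of_pos hρ0, div_le_one hρ0]
      exact (abs_le.2 hre).trans hρ1
    have hscale : ρ ≤ baseScale τ :=
      (le_baseScale_iff hρ0.le).2 ⟨by linarith, hρτ ▸ abs_le.2 hre⟩
    have ht : (τ + 1) / 2 ∈ Icc 0 1 :=
      ⟨by linarith [(abs_le.1 hτ1).1], by linarith [(abs_le.1 hτ1).2]⟩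
    have hτt : 2 * ((τ + 1) / 2) - 1 = τ := by ring
    obtain ⟨s, hs, hsρ : rayScale _ = ρ⟩ := (image_rayScale ht).ge ⟨hρ1, hτt.symm ▸ hscale⟩
    refine ⟨((τ + 1) / 2, s), ⟨⟨ht.1, hs.1⟩, ht.2, hs.2⟩, Complex.ext ?_ ?_⟩
    · rw [squareParam, hsρ, hτt, hρτ]
    · rw [squareParam, hsρ, hρ]
      ring

lemma eq_of_squareParam_eq {p p' : ℝ × ℝ} (hp : p ∈ Icc 0 1) (hp1 : p.1 ∈ Ioo 0 1)
    (h : squareParam p = squareParam p') : p = p' := by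
  obtain ⟨t, s⟩ := p
  obtain ⟨t', s'⟩ := p'
  have hbase : 1 < baseScale (2 * t - 1) :=
    one_lt_baseScale (abs_lt.2 ⟨by linarith [hp1.1], by linarith [hp1.2]⟩)
  obtain ⟨hre, him⟩ := Complex.ext_iff.1 h
  have hscale : rayScale (t, s) = rayScale (t', s') := by
    simpa only [squareParam, sub_right_inj, mul_right_inj' (two_ne_zero' ℝ)] using him
  have hpos : rayScale (t, s) ≠ 0 := (one_pos.trans_le (rayScale_mem hp).1).ne'
  obtain rfl : t = t' := by
    simpa only [squareParam, ← hscale, mul_right_inj' hpos, sub_left_inj,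
      mul_right_inj' (two_ne_zero' ℝ)] using hre
  exact congrArg (Prod.mk t) (AffineMap.lineMap_injective ℝ hbase.ne' hscale)

/-- The lateral and lower sides of `unitCell`. -/
def unitCellBase : Set ℂ :=
  {w | |w.re| = 1 ∨ w.im = -1}

lemma squareParam_eq_base {p : ℝ × ℝ} (hp : p ∈ Icc 0 1) (h : squareParam p ∈ unitCellBase) :
    squareParam p = squareParam (p.1, 0) := by
  obtain ⟨hρ1, hρ⟩ := rayScale_mem hp
  obtain ⟨htwo, habs⟩ := (le_baseScale_iff (zero_le_one.trans (hρ1.trans hρ))).1 le_rfl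
  suffices rayScale p = rayScale (p.1, 0) by simp only [squareParam, this]
  rw [rayScale_zero]
  refine hρ.antisymm ?_
  rcases h with h | h
  · change |rayScale p * _| = 1 at h
    rw [abs_mul, abs_of_nonneg (by linarith)] at h habs
    exact le_of_mul_le_mul_right (habs.trans_eq h.symm)
      (pos_of_mul_pos_right (h ▸ one_pos) (by linarith))
  · change 3 - 2 * rayScale p = -1 at h
    linarith

lemma squareParam_base_mem (t : ℝ) : squareParam (t, 0) ∈ unitCellBase := by
  rw [unitCellBase, mem_ofPred_eq, squareParam, rayScale_zero, baseScale]
  rcases le_total 1 (2 * |2 * t - 1|) with h | h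
  · left
    have habs : |2 * t - 1| ≠ 0 := by linarith
    rw [max_eq_right h, abs_mul, abs_div, abs_mul, abs_abs, abs_two]
    field_simp
  · right
    rw [max_eq_left h]
    norm_num

lemma volume_squareParam_base : volume ((fun t => squareParam (t, 0)) '' Icc 0 1) = 0 := by
  have hre (c : ℝ) : volume {w : ℂ | w.re = c} = 0 :=
    measure_setOf_linearMap_eq_zero volume (L := Complex.reLm)
      (fun h => one_ne_zero (LinearMap.congr_fun h 1)) c
  have him (c : ℝ) : volume {w : ℂ | w.im = c} = 0 :=
    measure_setOf_linearMap_eq_zero volume (L := Complex.imLm)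
      (fun h => one_ne_zero (LinearMap.congr_fun h Complex.I)) c
  refine measure_mono_null ?_ (measure_union_null (measure_union_null (hre 1) (hre (-1)))
    (him (-1)))
  rintro _ ⟨t, -, rfl⟩
  exact (squareParam_base_mem t).imp_left eq_or_eq_neg_of_abs_eq

lemma volume_squareParam_fibre (t : ℝ) :
    volume ((fun s => squareParam (t, s)) '' Icc 0 1) = 0 := by
  have hL : (2 : ℝ) • Complex.reLm + (2 * t - 1) • Complex.imLm ≠ 0 := fun h =>
    two_ne_zero (by simpa using LinearMap.congr_fun h 1)
  refine measure_mono_null ?_ (measure_setOf_linearMap_eq_zero volume hL (3 * (2 * t - 1)))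
  rintro _ ⟨s, -, rfl⟩
  simp [squareParam]
  ring

lemma squareParam_top_mem (t : ℝ) : squareParam (t, 1) ∈ closure unitCellᶜ := by
  rw [closure_compl, unitCell, Complex.interior_reProdIm, interior_Icc, mem_compl_iff,
    Complex.mem_reProdIm]
  intro h
  have hlt : 3 - 2 * rayScale (t, 1) < 1 := h.2.2
  rw [rayScale_one] at hlt
  linarith

/-- `unitCell`, fibred from its lateral and lower sides to its upper side, and moved by the
similarity `w ↦ z₀ + u * w`. -/
noncomputable def squareCell (z₀ : ℂ) {u : ℂ} (hu : u ≠ 0) : FoliatedCell where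
  param p := z₀ + u * squareParam p
  continuous_param := continuous_const.add (continuous_squareParam.const_mul u)
  eq_of_param_eq p hp p' _ hp1 h :=
    eq_of_squareParam_eq hp hp1 (mul_left_cancel₀ hu (add_left_cancel h))
  top_mem_closure t _ := by
    let φ : ℂ ≃ₜ ℂ := (Homeomorph.mulLeft₀ u hu).trans (Homeomorph.addLeft z₀)
    have himage : (fun p => z₀ + u * squareParam p) '' Icc 0 1 = φ '' unitCell := by
      rw [← image_squareParam, image_image]
      rfl
    rw [himage, ← image_compl_eq φ.bijective, ← φ.image_closure]
    exact mem_image_of_mem φ (squareParam_top_mem t)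
  volume_base := by
    rw [← image_image (fun w => z₀ + u * w)]
    exact addHaar_image_eq_zero_of_differentiableOn_of_addHaar_eq_zero volume (by fun_prop)
      volume_squareParam_base
  volume_fibre t := by
    rw [← image_image (fun w => z₀ + u * w)]
    exact addHaar_image_eq_zero_of_differentiableOn_of_addHaar_eq_zero volume (by fun_prop)
      (volume_squareParam_fibre t)

lemma carrier_squareCell (z₀ : ℂ) {u : ℂ} (hu : u ≠ 0) :
    (squareCell z₀ hu).carrier = {z | (z - z₀) / u ∈ unitCell} := by
  rw [← image_squareParam, FoliatedCell.carrier]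
  ext z
  simp only [squareCell, mem_image, mem_ofPred_eq, eq_div_iff hu, eq_sub_iff_add_eq',
    mul_comm u]

lemma attachedTo_squareCell {X : Set ℂ} (z₀ : ℂ) {u : ℂ} (hu : u ≠ 0)
    (h : ∀ z ∈ X, (z - z₀) / u ∈ unitCell → (z - z₀) / u ∈ unitCellBase) :
    (squareCell z₀ hu).AttachedTo X := by
  intro p hp hpX
  have hw : (z₀ + u * squareParam p - z₀) / u = squareParam p := by
    rw [add_sub_cancel_left, mul_div_cancel_left₀ _ hu]
  have hbase := h _ hpX
  simp only [squareCell, hw] at hbase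
  exact congrArg (fun w => z₀ + u * w)
    (squareParam_eq_base hp (hbase (image_squareParam ▸ mem_image_of_mem _ hp)))

end SquareCell

section Grid

variable {h : ℝ} {S S' : Set (ℤ × ℤ)} {a b p q : ℤ × ℤ} {z : ℂ}

/-- The square with index `p` of the square grid of mesh `h`. -/
def cell (h : ℝ) (p : ℤ × ℤ) : Set ℂ :=
  Icc (h * p.1) (h * (p.1 + 1)) ×ℂ Icc (h * p.2) (h * (p.2 + 1))

/-- The union of the squares of the grid of mesh `h` with index in `S`. -/
def cells (h : ℝ) (S : Set (ℤ × ℤ)) : Set ℂ :=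
  ⋃ p ∈ S, cell h p

lemma mem_cells : z ∈ cells h S ↔ ∃ p ∈ S, z ∈ cell h p := by
  simp only [cells, mem_iUnion, exists_prop]

lemma cell_subset_cells (hp : p ∈ S) : cell h p ⊆ cells h S :=
  subset_biUnion_of_mem hp

lemma cells_mono (hSS' : S ⊆ S') : cells h S ⊆ cells h S' :=
  biUnion_subset_biUnion_left hSS'

lemma isCompact_cells (hS : S.Finite) : IsCompact (cells h S) :=
  hS.isCompact_biUnion fun _ _ => isCompact_Icc.reProdIm isCompact_Icc

lemma exists_mem_cell (hh : 0 < h) (z : ℂ) : ∃ p, z ∈ cell h p := by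
  have key (x : ℝ) : x ∈ Icc (h * ⌊x / h⌋) (h * (⌊x / h⌋ + 1)) := by
    constructor
    · rw [← le_div_iff₀' hh]
      exact Int.floor_le _
    · rw [← div_le_iff₀' hh]
      exact (Int.lt_floor_add_one _).le
  exact ⟨(⌊z.re / h⌋, ⌊z.im / h⌋), key _, key _⟩

lemma cell_subset_closedBall (hz : z ∈ cell h p) : cell h p ⊆ Metric.closedBall z (2 * h) := by
  intro w hw
  rw [mem_closedBall_iff_norm, two_mul]
  refine (Complex.norm_le_abs_re_add_abs_im _).trans (add_le_add ?_ ?_)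
  · rw [Complex.sub_re]
    exact (abs_sub_le_of_le_of_le hw.1.1 hw.1.2 hz.1.1 hz.1.2).trans_eq (by ring)
  · rw [Complex.sub_im]
    exact (abs_sub_le_of_le_of_le hw.2.1 hw.2.2 hz.2.1 hz.2.2).trans_eq (by ring)

lemma intCast_eq_or_of_mem_Icc {m n : ℤ} {x : ℝ} (hh : 0 < h) (hm : x ∈ Icc (h * m) (h * (m + 1)))
    (hn : x ∈ Icc (h * n) (h * (n + 1))) :
    m = n ∨ m = n - 1 ∧ x = h * n ∨ m = n + 1 ∧ x = h * (n + 1) := by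
  have hmn : m ≤ n + 1 := by exact_mod_cast le_of_mul_le_mul_left (hm.1.trans hn.2) hh
  have hnm : n ≤ m + 1 := by exact_mod_cast le_of_mul_le_mul_left (hn.1.trans hm.2) hh
  obtain rfl | rfl | rfl : m = n ∨ m = n - 1 ∨ m = n + 1 := by lia
  · exact Or.inl rfl
  · refine Or.inr (Or.inl ⟨rfl, hn.1.antisymm' ?_⟩)
    simpa using hm.2
  · refine Or.inr (Or.inr ⟨rfl, hn.2.antisymm ?_⟩)
    simpa using hm.1

lemma eq_of_mem_interior_cell (hh : 0 < h) (hz : z ∈ interior (cell h p)) (hzq : z ∈ cell h q) :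
    q = p := by
  rw [cell, Complex.interior_reProdIm, interior_Icc, interior_Icc] at hz
  obtain ⟨⟨hre, hre'⟩, him, him'⟩ := hz
  refine Prod.ext ?_ ?_
  · rcases intCast_eq_or_of_mem_Icc hh hzq.1 ⟨hre.le, hre'.le⟩ with heq | ⟨-, heq⟩ | ⟨-, heq⟩
    exacts [heq, (hre.ne' heq).elim, (hre'.ne heq).elim]
  · rcases intCast_eq_or_of_mem_Icc hh hzq.2 ⟨him.le, him'.le⟩ with heq | ⟨-, heq⟩ | ⟨-, heq⟩
    exacts [heq, (him.ne' heq).elim, (him'.ne heq).elim]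

lemma interior_cell_subset_sdiff (hh : 0 < h) (hp : p ∉ S) :
    interior (cell h p) ⊆ cell h p \ cells h S := fun _ hz =>
  ⟨interior_subset hz, fun hzS =>
    have ⟨_, hq, hzq⟩ := mem_cells.1 hzS
    hp (eq_of_mem_interior_cell hh hz hzq ▸ hq)⟩

lemma convex_cell : Convex ℝ (cell h p) :=
  ((convex_Icc _ _).linear_preimage Complex.reLm).inter
    ((convex_Icc _ _).linear_preimage Complex.imLm)

lemma cell_subset_closure_interior (hh : 0 < h) : cell h p ⊆ closure (interior (cell h p)) := by
  have hlt (m : ℤ) : h * m ≠ h * (m + 1) := (mul_lt_mul_of_pos_left (lt_add_one _) hh).ne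
  rw [cell, Complex.interior_reProdIm, Complex.closure_reProdIm, interior_Icc, interior_Icc,
    closure_Ioo (hlt _), closure_Ioo (hlt _)]

lemma isPreconnected_cell_sdiff (hh : 0 < h) (hp : p ∉ S) :
    IsPreconnected (cell h p \ cells h S) :=
  convex_cell.interior.isPreconnected.subset_closure (interior_cell_subset_sdiff hh hp)
    (sdiff_subset.trans (cell_subset_closure_interior hh))

/-- Two squares of the grid share a side. -/
def CellAdj (p q : ℤ × ℤ) : Prop :=
  q = (p.1 + 1, p.2) ∨ q = (p.1 - 1, p.2) ∨ q = (p.1, p.2 + 1) ∨ q = (p.1, p.2 - 1)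

lemma exists_mem_cell_inter (hh : 0 < h) (hp : p ∉ S) (hq : q ∉ S) (hpq : CellAdj p q) :
    ∃ z ∈ cell h p ∩ cell h q, z ∉ cells h S := by
  have key (m : ℤ) (x : ℝ) : h * x ∈ Icc (h * m) (h * (m + 1)) ↔ ↑m ≤ x ∧ x ≤ m + 1 := by
    rw [mem_Icc, mul_le_mul_iff_right₀ hh, mul_le_mul_iff_right₀ hh]
  refine ⟨⟨h * ((p.1 + q.1 + 1) / 2), h * ((p.2 + q.2 + 1) / 2)⟩, ⟨?_, ?_⟩, fun hz => ?_⟩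
  · simp only [cell, Complex.mem_reProdIm, key]
    rcases hpq with rfl | rfl | rfl | rfl <;> push_cast <;>
      refine ⟨⟨?_, ?_⟩, ?_, ?_⟩ <;> linarith
  · simp only [cell, Complex.mem_reProdIm, key]
    rcases hpq with rfl | rfl | rfl | rfl <;> push_cast <;>
      refine ⟨⟨?_, ?_⟩, ?_, ?_⟩ <;> linarith
  · obtain ⟨r, hr, hzr⟩ := mem_cells.1 hz
    simp only [cell, Complex.mem_reProdIm, key, le_div_iff₀ (two_pos (α := ℝ)),
      div_le_iff₀ (two_pos (α := ℝ))] at hzr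
    norm_cast at hzr
    have : r = p ∨ r = q := by
      rw [Prod.ext_iff, Prod.ext_iff]
      rcases hpq with rfl | rfl | rfl | rfl <;> simp only at hzr ⊢ <;> lia
    rcases this with rfl | rfl
    exacts [hp hr, hq hr]

/-- The centre of the square `cell h a`. -/
noncomputable def cellCenter (h : ℝ) (a : ℤ × ℤ) : ℂ :=
  ⟨h * (a.1 + 1 / 2), h * (a.2 + 1 / 2)⟩

/-- The point of `unitCell` which corresponds to `z` when the square `cell h a` is identified with
`unitCell`. -/
noncomputable def cellCoord (h : ℝ) (a : ℤ × ℤ) (z : ℂ) : ℂ :=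
  (z - cellCenter h a) / (h / 2 : ℝ)

lemma cellCoord_re (h : ℝ) (a : ℤ × ℤ) (z : ℂ) :
    (cellCoord h a z).re = (z.re - h * (a.1 + 1 / 2)) / (h / 2) :=
  Complex.div_ofReal_re _ _

lemma cellCoord_im (h : ℝ) (a : ℤ × ℤ) (z : ℂ) :
    (cellCoord h a z).im = (z.im - h * (a.2 + 1 / 2)) / (h / 2) :=
  Complex.div_ofReal_im _ _

lemma cellCoord_mem_unitCell_iff (hh : 0 < h) : cellCoord h a z ∈ unitCell ↔ z ∈ cell h a := by
  have key (m x : ℝ) : (x - h * (m + 1 / 2)) / (h / 2) ∈ Icc (-1) 1 ↔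
      x ∈ Icc (h * m) (h * (m + 1)) := by
    rw [mem_Icc, mem_Icc, le_div_iff₀ (half_pos hh), div_le_iff₀ (half_pos hh)]
    constructor <;> rintro ⟨_, _⟩ <;> constructor <;> linarith
  rw [unitCell, cell, Complex.mem_reProdIm, Complex.mem_reProdIm, cellCoord_re, cellCoord_im, key,
    key]

lemma intCast_eq_or_of_coord {m n : ℤ} {x : ℝ} (hh : 0 < h) (hm : x ∈ Icc (h * m) (h * (m + 1)))
    (hn : x ∈ Icc (h * n) (h * (n + 1))) :
    m = n ∨ m = n - 1 ∧ (x - h * (n + 1 / 2)) / (h / 2) = -1 ∨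
      m = n + 1 ∧ (x - h * (n + 1 / 2)) / (h / 2) = 1 := by
  simp only [div_eq_iff (half_pos hh).ne']
  rcases intCast_eq_or_of_mem_Icc hh hm hn with heq | ⟨heq, hx⟩ | ⟨heq, hx⟩
  · exact Or.inl heq
  · exact Or.inr (Or.inl ⟨heq, by linarith⟩)
  · exact Or.inr (Or.inr ⟨heq, by linarith⟩)

lemma exists_cellCoord_of_mem_cells (hh : 0 < h) (hz : z ∈ cells h S) (hza : z ∈ cell h a) :
    ∃ p ∈ S,
      (p.1 = a.1 ∨ p.1 = a.1 - 1 ∧ (cellCoord h a z).re = -1 ∨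
        p.1 = a.1 + 1 ∧ (cellCoord h a z).re = 1) ∧
      (p.2 = a.2 ∨ p.2 = a.2 - 1 ∧ (cellCoord h a z).im = -1 ∨
        p.2 = a.2 + 1 ∧ (cellCoord h a z).im = 1) := by
  obtain ⟨p, hp, hzp⟩ := mem_cells.1 hz
  rw [cellCoord_re, cellCoord_im]
  exact ⟨p, hp, intCast_eq_or_of_coord hh hzp.1 hza.1, intCast_eq_or_of_coord hh hzp.2 hza.2⟩

lemma exists_rotation_cellCoord_mem_unitCellBase (hh : 0 < h) (hab : CellAdj a b) (ha : a ∉ S)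
    (hb : b ∉ S) :
    ∃ ζ : ℂ, ζ ≠ 0 ∧ (∀ w, w / ζ ∈ unitCell ↔ w ∈ unitCell) ∧
      ∀ z ∈ cells h S, z ∈ cell h a → cellCoord h a z / ζ ∈ unitCellBase := by
  simp only [unitCell, unitCellBase, Complex.mem_reProdIm, mem_Icc, mem_ofPred_eq,
    abs_eq zero_le_one]
  rcases hab with rfl | rfl | rfl | rfl
  · refine ⟨-Complex.I, neg_ne_zero.2 Complex.I_ne_zero, fun w => ?_, fun z hz hza => ?_⟩ <;>
      simp only [div_neg, Complex.div_I, neg_neg, Complex.mul_I_re, Complex.mul_I_im]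
    · grind
    · obtain ⟨p, hp, hre, him⟩ := exists_cellCoord_of_mem_cells hh hz hza
      grind
  · refine ⟨Complex.I, Complex.I_ne_zero, fun w => ?_, fun z hz hza => ?_⟩ <;>
      simp only [Complex.div_I, Complex.neg_re, Complex.neg_im, Complex.mul_I_re, Complex.mul_I_im]
    · grind
    · obtain ⟨p, hp, hre, him⟩ := exists_cellCoord_of_mem_cells hh hz hza
      grind
  · refine ⟨1, one_ne_zero, fun w => by rw [div_one], fun z hz hza => ?_⟩
    obtain ⟨p, hp, hre, him⟩ := exists_cellCoord_of_mem_cells hh hz hza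
    rw [div_one]
    grind
  · refine ⟨-1, neg_ne_zero.2 one_ne_zero, fun w => ?_, fun z hz hza => ?_⟩ <;>
      simp only [div_neg, div_one, Complex.neg_re, Complex.neg_im]
    · grind
    · obtain ⟨p, hp, hre, him⟩ := exists_cellCoord_of_mem_cells hh hz hza
      grind

lemma exists_foliatedCell (hh : 0 < h) (hab : CellAdj a b) (ha : a ∉ S) (hb : b ∉ S) :
    ∃ T : FoliatedCell, T.carrier = cell h a ∧ T.AttachedTo (cells h S) := by
  obtain ⟨ζ, hζ, hunit, hbase⟩ := exists_rotation_cellCoord_mem_unitCellBase hh hab ha hb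
  have hu : ((h / 2 : ℝ) : ℂ) * ζ ≠ 0 :=
    mul_ne_zero (Complex.ofReal_ne_zero.2 (half_pos hh).ne') hζ
  have hmem (z : ℂ) : cellCoord h a z / ζ ∈ unitCell ↔ z ∈ cell h a := by
    rw [hunit, cellCoord_mem_unitCell_iff hh]
  refine ⟨squareCell (cellCenter h a) hu, ?_, attachedTo_squareCell _ hu fun z hz hzu => ?_⟩
  · rw [carrier_squareCell]
    ext z
    rw [mem_ofPred_eq, ← div_div]
    exact hmem z
  · rw [← div_div] at hzu ⊢
    exact hbase z hz ((hmem z).1 hzu)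

end Grid

section Accessible

variable {h : ℝ} {S S' : Set (ℤ × ℤ)} {p q : ℤ × ℤ} {U : Set ℂ} {z w : ℂ}

/-- Two squares of the grid can be joined by a chain of adjacent squares outside `S`; the first
square of the chain may belong to `S`. -/
def CellReach (S : Set (ℤ × ℤ)) : ℤ × ℤ → ℤ × ℤ → Prop :=
  Relation.ReflTransGen fun p q => CellAdj p q ∧ q ∉ S

/-- Every square outside `S` can be joined outside `S` to squares which leave `U` or lie arbitrarily
far away. -/
def CellAccessible (U : Set ℂ) (h : ℝ) (S : Set (ℤ × ℤ)) : Prop :=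
  ∀ q ∉ S, ∀ R, ∃ r, CellReach S q r ∧ ¬ cell h r ⊆ U ∩ Metric.ball 0 R

namespace CellReach

lemma notMem (hpq : CellReach S p q) (hp : p ∉ S) : q ∉ S := by
  cases hpq with
  | refl => exact hp
  | tail _ hstep => exact hstep.2

lemma anti (hSS' : S ⊆ S') (hpq : CellReach S' p q) : CellReach S p q :=
  Relation.ReflTransGen.mono (fun _ _ hab => ⟨hab.1, fun hb => hab.2 (hSS' hb)⟩) p q hpq

lemma exists_exit (hpq : CellReach S p q) (hp : p ∈ S' \ S) (hq : q ∉ S') :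
    ∃ a ∈ S' \ S, ∃ b ∉ S', CellAdj a b := by
  induction hpq with
  | refl => exact (hq hp.1).elim
  | @tail b d hpb hbd ih =>
    by_cases hb : b ∈ S'
    · exact ⟨b, ⟨hb, notMem hpb hp.2⟩, d, hq, hbd.1⟩
    · exact ih hb

lemma mem_connectedComponentIn (hh : 0 < h) (hpq : CellReach S p q) (hp : p ∉ S)
    (hz : z ∈ cell h p \ cells h S) (hw : w ∈ cell h q \ cells h S) :
    w ∈ connectedComponentIn (cells h S)ᶜ z := by
  induction hpq generalizing w with
  | refl =>
    exact (isPreconnected_cell_sdiff hh hp).subset_connectedComponentIn hz (fun _ hx => hx.2) hw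
  | @tail q r hpq hqr ih =>
    obtain ⟨x, ⟨hxq, hxr⟩, hxS⟩ := exists_mem_cell_inter hh (notMem hpq hp) hqr.2 hqr.1
    rw [connectedComponentIn_eq (ih ⟨hxq, hxS⟩)]
    exact (isPreconnected_cell_sdiff hh hqr.2).subset_connectedComponentIn ⟨hxr, hxS⟩
      (fun _ hx => hx.2) hw

end CellReach

namespace CellAccessible

lemma holeFree (hh : 0 < h) (hSU : cells h S ⊆ U) (hS : CellAccessible U h S) :
    HoleFree U (cells h S) := by
  intro b hb
  by_contra! hcon
  obtain ⟨hbounded, hU⟩ := hcon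
  obtain ⟨q, hbq⟩ := exists_mem_cell hh b
  have hq : q ∉ S := fun hq => hb (cell_subset_cells hq hbq)
  obtain ⟨R, hR⟩ := hbounded.closure.subset_ball 0
  obtain ⟨r, hqr, hr⟩ := hS q hq R
  have hcomp : cell h r \ cells h S ⊆ connectedComponentIn (cells h S)ᶜ b := fun w hw =>
    hqr.mem_connectedComponentIn hh hq ⟨hbq, hb⟩ hw
  refine hr (subset_inter (fun w hw => ?_) ?_)
  · by_cases hwS : w ∈ cells h S
    exacts [hSU hwS, hU w (hcomp ⟨hw, hwS⟩)]
  · exact (cell_subset_closure_interior hh).trans ((closure_mono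
      ((interior_cell_subset_sdiff hh (hqr.notMem hq)).trans hcomp)).trans hR)

lemma exists_removable (hS : CellAccessible U h S) (hS' : CellAccessible U h S')
    (hfin : S'.Finite) (hSU : cells h S' ⊆ U) (hne : (S' \ S).Nonempty) :
    ∃ a ∈ S' \ S, ∃ b ∉ S', CellAdj a b ∧ CellAccessible U h (S' \ {a}) := by
  obtain ⟨a₀, ha₀⟩ := hne
  obtain ⟨R, hR⟩ := (isCompact_cells (h := h) hfin).isBounded.subset_ball 0
  obtain ⟨r, hr, hrR⟩ := hS a₀ ha₀.2 R
  have hrS : r ∉ S' := fun hrS =>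
    hrR ((cell_subset_cells hrS).trans (subset_inter hSU hR))
  obtain ⟨a, ha, b, hb, hab⟩ := hr.exists_exit ha₀ hrS
  refine ⟨a, ha, b, hb, hab, fun q hq R' => ?_⟩
  by_cases hqS : q ∈ S'
  · obtain rfl : q = a := by
      by_contra hqa
      exact hq ⟨hqS, hqa⟩
    obtain ⟨s, hs, hsR⟩ := hS' b hb R'
    exact ⟨s, .head ⟨hab, fun hb' => hb hb'.1⟩ (hs.anti sdiff_subset), hsR⟩
  · obtain ⟨s, hs, hsR⟩ := hS' q hqS R'
    exact ⟨s, hs.anti sdiff_subset, hsR⟩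

end CellAccessible

lemma exists_dominates_cells (hh : 0 < h) (hS : CellAccessible U h S)
    (hS' : CellAccessible U h S') (hSS' : S ⊆ S') (hfin : S'.Finite) (hSU : cells h S' ⊆ U)
    {l : ℂ → ℝ} (hl : ContinuousOn l U) {H : ℂ → ℂ × ℂ} (hH : DifferentiableOn ℂ H U)
    (hdom : Dominates l H (cells h S)) {ε : ℝ} (hε : 0 < ε) :
    ∃ H' : ℂ → ℂ × ℂ, DifferentiableOn ℂ H' U ∧ (∀ z ∈ cells h S, ‖H' z - H z‖ < ε) ∧
      Dominates l H' (cells h S') := by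
  induction hn : (S' \ S).ncard generalizing S' ε with
  | zero =>
    obtain rfl : S = S' := hSS'.antisymm (sdiff_eq_empty.1 ((ncard_eq_zero hfin.sdiff).1 hn))
    exact ⟨H, hH, fun z _ => by simpa using hε, hdom⟩
  | succ n ih =>
    obtain ⟨a, ha, b, hb, hab, hacc⟩ := hS.exists_removable hS' hfin hSU
      (nonempty_of_ncard_ne_zero (hn ▸ n.succ_ne_zero))
    have hsub : S ⊆ S' \ {a} := fun p hp => ⟨hSS' hp, fun hpa => ha.2 (hpa ▸ hp)⟩
    obtain ⟨T, hT, hTatt⟩ := exists_foliatedCell (S := S' \ {a}) hh hab (fun ha' => ha'.2 rfl)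
      fun hb' => hb hb'.1
    have hcells : cells h (S' \ {a}) ∪ T.carrier = cells h S' := by
      rw [hT, union_comm, cells, ← biUnion_insert, insert_sdiff_self_of_mem ha.1, cells]
    obtain ⟨H₁, hH₁, hclose₁, hdom₁⟩ := ih hacc hsub hfin.sdiff
      ((cells_mono sdiff_subset).trans hSU) (half_pos hε)
      (by rw [sdiff_sdiff_comm, ncard_sdiff_singleton_of_mem ha, hn, Nat.add_sub_cancel])
    obtain ⟨H₂, hH₂, hclose₂, hdom₂⟩ := exists_dominates_union (isCompact_cells hfin.sdiff)
      (hcells ▸ hSU) (hcells ▸ hS'.holeFree hh hSU) hTatt hl hH₁ hdom₁ (half_pos hε)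
    refine ⟨H₂, hH₂, fun z hz => ?_, hcells ▸ hdom₂⟩
    linarith [norm_sub_le_norm_sub_add_norm_sub (H₂ z) (H₁ z) (H z), hclose₁ z hz,
      hclose₂ z (cells_mono hsub hz)]

end Accessible

section Dyadic

variable {h R : ℝ} {S : Set (ℤ × ℤ)} {p q : ℤ × ℤ} {U V : Set ℂ} {z : ℂ}

lemma add_mem_cell (hz : z ∈ cell h p) (m : ℤ) : z + (h * m : ℝ) ∈ cell h (p.1 + m, p.2) := by
  obtain ⟨⟨hre, hre'⟩, him⟩ := hz
  refine ⟨?_, by simpa only [mem_preimage, Complex.add_im, Complex.ofReal_im, add_zero] using him⟩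
  simp only [mem_preimage, Complex.add_re, Complex.ofReal_re, mem_Icc, Int.cast_add]
  constructor <;> linarith

lemma exists_int_forall_le_norm_add (z : ℂ) :
    ∃ m : ℤ, (m = 1 ∨ m = -1) ∧
      ∀ x : ℝ, 0 ≤ x → ‖z‖ ≤ ‖z + (x * m : ℝ)‖ ∧ x ≤ ‖z + (x * m : ℝ)‖ := by
  suffices ∃ m : ℤ, (m = 1 ∨ m = -1) ∧ 0 ≤ z.re * m by
    obtain ⟨m, hm, hzm⟩ := this
    refine ⟨m, hm, fun x hx => ?_⟩
    have hm2 : (m : ℝ) ^ 2 = 1 := by rcases hm with rfl | rfl <;> norm_num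
    have hsq : ‖z + (x * m : ℝ)‖ ^ 2 = ‖z‖ ^ 2 + 2 * x * (z.re * m) + x ^ 2 := by
      rw [← Complex.normSq_eq_norm_sq, ← Complex.normSq_eq_norm_sq, Complex.normSq_apply,
        Complex.normSq_apply, Complex.add_re, Complex.add_im, Complex.ofReal_re, Complex.ofReal_im]
      linear_combination x ^ 2 * hm2
    have hcross : 0 ≤ 2 * x * (z.re * m) := by positivity
    constructor <;> refine le_of_sq_le_sq ?_ (norm_nonneg _) <;>
      nlinarith [sq_nonneg x, sq_nonneg ‖z‖]
  rcases le_total 0 z.re with hre | hre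
  · exact ⟨1, Or.inl rfl, by simpa using hre⟩
  · exact ⟨-1, Or.inr rfl, by simpa using hre⟩

lemma CellAccessible.of_inter_ball (hh : 0 < h) (hS : ∀ p ∈ S, cell h p ⊆ Metric.ball 0 R)
    (hreach : ∀ q ∉ S, ∃ r, CellReach S q r ∧ ¬ cell h r ⊆ U ∩ Metric.ball 0 R) :
    CellAccessible U h S := by
  intro q hq R'
  obtain ⟨r, hqr, hr⟩ := hreach q hq
  obtain ⟨z, hzr, hz⟩ := not_subset.1 hr
  by_cases hzU : z ∈ U
  swap
  · exact ⟨r, hqr, fun hsub => hzU (hsub hzr).1⟩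
  have hRz : R ≤ ‖z‖ := by simpa [hzU] using hz
  obtain ⟨m, hm, hnorm⟩ := exists_int_forall_le_norm_add z
  have hmem (k : ℕ) : z + (h * k * m : ℝ) ∈ cell h (r.1 + k * m, r.2) := by
    simpa only [Int.cast_mul, Int.cast_natCast, mul_assoc] using add_mem_cell hzr (k * m)
  have hray (k : ℕ) : CellReach S r (r.1 + k * m, r.2) := by
    induction k with
    | zero =>
      rw [Nat.cast_zero, zero_mul, add_zero]
      exact .refl
    | succ k ih =>
      refine ih.tail ⟨?_, fun hk => ?_⟩
      · rcases hm with rfl | rfl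
        · exact Or.inl (Prod.ext (by push_cast; ring) rfl)
        · exact Or.inr (Or.inl (Prod.ext (by push_cast; ring) rfl))
      · exact (hRz.trans (hnorm _ (by positivity)).1).not_gt
          (mem_ball_zero_iff.1 (hS _ hk (hmem (k + 1))))
  obtain ⟨k, hk⟩ := exists_nat_ge (R' / h)
  refine ⟨_, hqr.trans (hray k), fun hsub => ?_⟩
  exact (((div_le_iff₀' hh).1 hk).trans (hnorm _ (by positivity)).2).not_gt
    (mem_ball_zero_iff.1 (hsub (hmem k)).2)

/-- The indices of the squares of the grid of mesh `h` contained in `V`. -/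
def innerCells (V : Set ℂ) (h : ℝ) : Set (ℤ × ℤ) :=
  {p | cell h p ⊆ V}

lemma cells_innerCells_subset (V : Set ℂ) (h : ℝ) : cells h (innerCells V h) ⊆ V :=
  iUnion₂_subset fun _ hp => hp

lemma mem_cells_innerCells (hh : 0 < h) (hz : Metric.closedBall z (2 * h) ⊆ V) :
    z ∈ cells h (innerCells V h) :=
  have ⟨p, hzp⟩ := exists_mem_cell hh z
  mem_cells.2 ⟨p, (cell_subset_closedBall hzp).trans hz, hzp⟩

lemma finite_innerCells (hh : 0 < h) (hV : Bornology.IsBounded V) : (innerCells V h).Finite := by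
  obtain ⟨R, hR⟩ := hV.subset_closedBall 0
  let I := Icc (-⌈R / h⌉) ⌈R / h⌉
  have key {m : ℤ} (hm : |h * m| ≤ R) : m ∈ I := by
    rw [abs_mul, abs_of_pos hh, ← le_div_iff₀' hh] at hm
    rw [mem_Icc, ← abs_le]
    exact_mod_cast hm.trans (Int.le_ceil _)
  refine ((finite_Icc _ _).prod (finite_Icc _ _) : (I ×ˢ I).Finite).subset fun p hp => ?_
  have hle (m : ℤ) : h * m ≤ h * (m + 1) := mul_le_mul_of_nonneg_left (lt_add_one _).le hh.le
  have hcorner : (⟨h * p.1, h * p.2⟩ : ℂ) ∈ cell h p :=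
    ⟨left_mem_Icc.2 (hle _), left_mem_Icc.2 (hle _)⟩
  have hnorm := mem_closedBall_zero_iff.1 (hR (hp hcorner))
  exact ⟨key ((Complex.abs_re_le_norm _).trans hnorm), key ((Complex.abs_im_le_norm _).trans hnorm)⟩

lemma cellAccessible_innerCells (U : Set ℂ) (hh : 0 < h) (R : ℝ) :
    CellAccessible U h (innerCells (U ∩ Metric.ball 0 R) h) :=
  .of_inter_ball hh (fun _ hp => hp.trans inter_subset_right) fun q hq => ⟨q, .refl, hq⟩

/-- The index of the square of the grid of mesh `h` which contains the square with index `p` of the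
grid of mesh `h / 2`. -/
def cellParent (p : ℤ × ℤ) : ℤ × ℤ :=
  (p.1 / 2, p.2 / 2)

lemma cell_half_subset_cell_cellParent (hh : 0 < h) (p : ℤ × ℤ) :
    cell (h / 2) p ⊆ cell h (cellParent p) := by
  have key {m : ℤ} {x : ℝ} (hx : x ∈ Icc (h / 2 * m) (h / 2 * (m + 1))) :
      x ∈ Icc (h * ↑(m / 2)) (h * (↑(m / 2) + 1)) := by
    have hle : (2 * ↑(m / 2) : ℝ) ≤ m := by exact_mod_cast (by lia : 2 * (m / 2) ≤ m)
    have hge : (m : ℝ) ≤ 2 * ↑(m / 2) + 1 := by exact_mod_cast (by lia : m ≤ 2 * (m / 2) + 1)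
    constructor <;> nlinarith [hx.1, hx.2]
  exact fun z hz => ⟨key hz.1, key hz.2⟩

lemma exists_mem_cell_half {z : ℂ} (hz : z ∈ cell h q) :
    ∃ p, cellParent p = q ∧ z ∈ cell (h / 2) p := by
  have key {m : ℤ} {x : ℝ} (hx : x ∈ Icc (h * m) (h * (m + 1))) :
      ∃ n : ℤ, n / 2 = m ∧ x ∈ Icc (h / 2 * n) (h / 2 * (n + 1)) := by
    rcases le_total x (h / 2 * (2 * m + 1)) with hx' | hx'
    · refine ⟨2 * m, by lia, ?_, ?_⟩ <;> push_cast <;> linarith [hx.1]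
    · refine ⟨2 * m + 1, by lia, ?_, ?_⟩ <;> push_cast <;> linarith [hx.2]
  obtain ⟨m, hm, hzm⟩ := key hz.1
  obtain ⟨n, hn, hzn⟩ := key hz.2
  exact ⟨(m, n), Prod.ext hm hn, hzm, hzn⟩

lemma cells_half_preimage_cellParent (hh : 0 < h) (S : Set (ℤ × ℤ)) :
    cells (h / 2) (cellParent ⁻¹' S) = cells h S := by
  ext z
  simp only [mem_cells]
  constructor
  · rintro ⟨p, hp, hz⟩
    exact ⟨_, hp, cell_half_subset_cell_cellParent hh p hz⟩
  · rintro ⟨q, hq, hz⟩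
    obtain ⟨p, rfl, hzp⟩ := exists_mem_cell_half hz
    exact ⟨p, hq, hzp⟩

lemma cellReach_of_cellParent_eq (hpq : cellParent p = cellParent q) (hq : cellParent q ∉ S) :
    CellReach (cellParent ⁻¹' S) q p := by
  obtain ⟨h₁, h₂⟩ := Prod.ext_iff.1 hpq
  have hstep {a b : ℤ × ℤ} (hb : cellParent b = cellParent q) (hab : a = b ∨ CellAdj a b) :
      CellReach (cellParent ⁻¹' S) a b := by
    rcases hab with rfl | hab
    exacts [.refl, .single ⟨hab, by rwa [mem_preimage, hb]⟩]
  refine (hstep (b := (p.1, q.2)) (Prod.ext h₁ rfl) ?_).trans (hstep hpq ?_) <;>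
    simp only [CellAdj, Prod.ext_iff] <;> simp only [cellParent] at h₁ h₂ <;> lia

lemma cellAccessible_preimage_cellParent (U : Set ℂ) (hh : 0 < h) (R : ℝ) :
    CellAccessible U (h / 2) (cellParent ⁻¹' innerCells (U ∩ Metric.ball 0 R) h) := by
  refine .of_inter_ball (half_pos hh) (fun p hp => (cell_half_subset_cell_cellParent hh p).trans
    (hp.trans inter_subset_right)) fun q hq => ?_
  obtain ⟨z, hz, hzU⟩ := not_subset.1 hq
  obtain ⟨r, hrq, hzr⟩ := exists_mem_cell_half hz
  exact ⟨r, cellReach_of_cellParent_eq hrq hq, fun hsub => hzU (hsub hzr)⟩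

/-- An exhaustion of an open set `U` by compact unions of dyadic squares. -/
def dyadicExhaustion (U : Set ℂ) (n : ℕ) : Set ℂ :=
  cells (1 / 2 ^ n) (innerCells (U ∩ Metric.ball 0 n) (1 / 2 ^ n))

lemma dyadicExhaustion_eq_cells_half (U : Set ℂ) (n : ℕ) :
    dyadicExhaustion U n =
      cells (1 / 2 ^ (n + 1)) (cellParent ⁻¹' innerCells (U ∩ Metric.ball 0 n) (1 / 2 ^ n)) := by
  rw [dyadicExhaustion, ← cells_half_preimage_cellParent (by positivity), pow_succ, div_div]

lemma preimage_cellParent_innerCells_subset (U : Set ℂ) (n : ℕ) :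
    cellParent ⁻¹' innerCells (U ∩ Metric.ball 0 n) (1 / 2 ^ n) ⊆
      innerCells (U ∩ Metric.ball 0 ↑(n + 1)) (1 / 2 ^ (n + 1)) := by
  intro p hp
  rw [innerCells, mem_ofPred_eq, pow_succ, ← div_div]
  exact (cell_half_subset_cell_cellParent (by positivity) p).trans (hp.trans
    (inter_subset_inter_right _ (Metric.ball_subset_ball (by exact_mod_cast n.le_succ))))

lemma monotone_dyadicExhaustion (U : Set ℂ) : Monotone (dyadicExhaustion U) := by
  refine monotone_nat_of_le_succ fun n => ?_
  rw [dyadicExhaustion_eq_cells_half]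
  exact cells_mono (preimage_cellParent_innerCells_subset U n)

lemma dyadicExhaustion_zero (U : Set ℂ) : dyadicExhaustion U 0 = ∅ :=
  subset_empty_iff.1 <| (cells_innerCells_subset _ _).trans <| by simp

lemma exists_dyadicExhaustion_mem_nhds (hU : IsOpen U) (hz : z ∈ U) :
    ∃ n, dyadicExhaustion U n ∈ 𝓝 z := by
  obtain ⟨ρ, hρ, hball⟩ := Metric.isOpen_iff.1 hU z hz
  have hmesh : ∀ᶠ n : ℕ in atTop, 2 * (1 / 2 ^ n : ℝ) < ρ / 2 := by
    refine Tendsto.eventually_lt_const (half_pos hρ) ?_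
    simpa only [one_div_pow, mul_zero] using
      (tendsto_pow_atTop_nhds_zero_of_lt_one (r := (1 / 2 : ℝ)) one_half_pos.le
        one_half_lt_one).const_mul 2
  obtain ⟨n, hn, hnz⟩ :=
    (hmesh.and (tendsto_natCast_atTop_atTop.eventually_ge_atTop (‖z‖ + ρ))).exists
  refine ⟨n, mem_of_superset (Metric.ball_mem_nhds z (half_pos hρ)) fun w hw =>
    mem_cells_innerCells (by positivity) ?_⟩
  have hsub : Metric.closedBall w (2 * (1 / 2 ^ n)) ⊆ Metric.ball z ρ :=
    Metric.closedBall_subset_ball' (by linarith [Metric.mem_ball.1 hw])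
  refine hsub.trans (subset_inter hball (Metric.ball_subset_ball' ?_))
  rwa [dist_zero_right, add_comm]

lemma exists_dominates_dyadicExhaustion_succ {l : ℂ → ℝ} (hl : ContinuousOn l U) {n : ℕ}
    {H : ℂ → ℂ × ℂ} (hH : DifferentiableOn ℂ H U) (hdom : Dominates l H (dyadicExhaustion U n))
    {ε : ℝ} (hε : 0 < ε) :
    ∃ H' : ℂ → ℂ × ℂ, DifferentiableOn ℂ H' U ∧ Dominates l H' (dyadicExhaustion U (n + 1)) ∧
      ∀ z ∈ dyadicExhaustion U n, ‖H' z - H z‖ < ε := by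
  have hacc := cellAccessible_preimage_cellParent U (h := 1 / 2 ^ n) (by positivity) n
  rw [div_div, ← pow_succ] at hacc
  rw [dyadicExhaustion_eq_cells_half U n] at hdom ⊢
  have hbounded : Bornology.IsBounded (U ∩ Metric.ball 0 ↑(n + 1)) :=
    Metric.isBounded_ball.subset inter_subset_right
  obtain ⟨H', hH', hclose, hdom'⟩ := exists_dominates_cells (by positivity) hacc
    (cellAccessible_innerCells U (by positivity) ↑(n + 1))
    (preimage_cellParent_innerCells_subset U n) (finite_innerCells (by positivity) hbounded)
    ((cells_innerCells_subset _ _).trans inter_subset_left) hl hH hdom hε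
  exact ⟨H', hH', hdom', hclose⟩

end Dyadic

section Limit

lemma exists_tendstoLocallyUniformlyOn_of_norm_sub_lt {α E : Type*} [TopologicalSpace α]
    [NormedAddCommGroup E] [CompleteSpace E] {U : Set α} {X : ℕ → Set α} (hX : Monotone X)
    (hXU : ∀ z ∈ U, ∃ n, X n ∈ 𝓝 z) {F : ℕ → α → E}
    (hF : ∀ n, ∀ z ∈ X n, ‖F (n + 1) z - F n z‖ < 1 / 2 / 2 ^ n) :
    ∃ f : α → E, TendstoLocallyUniformlyOn F f atTop U ∧
      ∀ n, ∀ z ∈ X n, ‖f z - F n z‖ ≤ 1 / 2 ^ n := by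
  have hstep : ∀ n, ∀ z ∈ X n, ∀ k,
      dist (F (n + k) z) (F (n + (k + 1)) z) ≤ 1 / 2 ^ n / 2 / 2 ^ k := by
    intro n z hz k
    rw [dist_comm, dist_eq_norm]
    refine (hF (n + k) z (hX (Nat.le_add_right n k) hz)).le.trans_eq ?_
    rw [pow_add]
    field_simp
  have hlim : ∀ n, ∀ z ∈ X n,
      Tendsto (fun k => F (n + k) z) atTop (𝓝 (limUnder atTop fun m => F m z)) := by
    intro n z hz
    obtain ⟨a, ha⟩ := cauchySeq_tendsto_of_complete (cauchySeq_of_le_geometric_two (hstep n z hz))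
    have ha' : Tendsto (fun m => F m z) atTop (𝓝 a) := by
      rw [← tendsto_add_atTop_iff_nat n]
      simpa only [add_comm] using ha
    rwa [ha'.limUnder_eq]
  have hbound : ∀ n, ∀ z ∈ X n, ‖(limUnder atTop fun m => F m z) - F n z‖ ≤ 1 / 2 ^ n := by
    intro n z hz
    rw [← dist_eq_norm, dist_comm]
    exact dist_le_of_le_geometric_two_of_tendsto₀ (hstep n z hz) (hlim n z hz)
  refine ⟨fun z => limUnder atTop fun m => F m z, ?_, hbound⟩
  rw [Metric.tendstoLocallyUniformlyOn_iff]
  intro ε hε z hz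
  obtain ⟨n, hn⟩ := hXU z hz
  obtain ⟨m, hm⟩ := exists_pow_lt_of_lt_one hε (one_half_lt_one (α := ℝ))
  refine ⟨X n, mem_nhdsWithin_of_mem_nhds hn, ?_⟩
  filter_upwards [eventually_ge_atTop (max n m)] with k hk w hw
  rw [dist_eq_norm]
  refine (hbound k w (hX ((le_max_left _ _).trans hk) hw)).trans_lt (lt_of_le_of_lt ?_ hm)
  rw [← one_div_pow]
  exact pow_le_pow_of_le_one one_half_pos.le one_half_lt_one.le ((le_max_right _ _).trans hk)

variable {U : Set ℂ} {l : ℂ → ℝ}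

lemma exists_seq_dominates_dyadicExhaustion (hl : ContinuousOn l U) :
    ∃ F : ℕ → ℂ → ℂ × ℂ, (∀ n, DifferentiableOn ℂ (F n) U) ∧
      (∀ n, Dominates l (F n) (dyadicExhaustion U n)) ∧
      ∀ n, ∀ z ∈ dyadicExhaustion U n, ‖F (n + 1) z - F n z‖ < 1 / 2 / 2 ^ n := by
  let σ (n : ℕ) : Type :=
    {H : ℂ → ℂ × ℂ // DifferentiableOn ℂ H U ∧ Dominates l H (dyadicExhaustion U n)}
  have hnext (n : ℕ) (H : σ n) :
      ∃ H' : σ (n + 1), ∀ z ∈ dyadicExhaustion U n, ‖H'.1 z - H.1 z‖ < 1 / 2 / 2 ^ n := by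
    obtain ⟨H', hH', hdom', hclose⟩ := exists_dominates_dyadicExhaustion_succ hl H.2.1 H.2.2
      (by positivity : (0 : ℝ) < 1 / 2 / 2 ^ n)
    exact ⟨⟨H', hH', hdom'⟩, hclose⟩
  choose next hclose using hnext
  have hzero : Dominates l 0 (dyadicExhaustion U 0) := by
    simp [Dominates, dyadicExhaustion_zero]
  let F (n : ℕ) : σ n := Nat.rec ⟨0, differentiableOn_const 0, hzero⟩ next n
  exact ⟨fun n => (F n).1, fun n => (F n).2.1, fun n => (F n).2.2, fun n => hclose n (F n)⟩

theorem exists_dominates (hU : IsOpen U) (hl : ContinuousOn l U) :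
    ∃ H : ℂ → ℂ × ℂ, DifferentiableOn ℂ H U ∧ Dominates l H U := by
  obtain ⟨F, hF, hdom, hclose⟩ :=
    exists_seq_dominates_dyadicExhaustion (hl.add (continuousOn_const (c := 1)))
  obtain ⟨H, hlim, hH⟩ := exists_tendstoLocallyUniformlyOn_of_norm_sub_lt
    (monotone_dyadicExhaustion U) (fun _ hz => exists_dyadicExhaustion_mem_nhds hU hz) hclose
  refine ⟨H, hlim.differentiableOn (Eventually.of_forall hF) hU, fun z hz => ?_⟩
  obtain ⟨n, hn⟩ := exists_dyadicExhaustion_mem_nhds hU hz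
  have hzn := mem_of_mem_nhds hn
  have hmaxRe : |maxRe (H z) - maxRe (F n z)| ≤ 1 :=
    calc |maxRe (H z) - maxRe (F n z)| ≤ ‖H z - F n z‖ := by
          simpa [dist_eq_norm] using lipschitzWith_maxRe.dist_le_mul (H z) (F n z)
      _ ≤ 1 / 2 ^ n := hH n z hzn
      _ ≤ 1 := div_le_one_of_le₀ (one_le_pow₀ one_le_two) (by positivity)
  have hdomz : l z + 1 < maxRe (F n z) := hdom n z hzn
  linarith [(abs_le.1 hmaxRe).1]

end Limit

section ProperMap

lemma exists_continuousOn_isCompact_sublevel {E : Type*} [NormedAddCommGroup E] [ProperSpace E]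
    {U : Set E} (hU : IsOpen U) :
    ∃ l : E → ℝ, ContinuousOn l U ∧ ∀ C, IsCompact {z ∈ U | l z ≤ C} := by
  rcases Uᶜ.eq_empty_or_nonempty with hUc | hUc
  · obtain rfl : U = univ := compl_empty_iff.1 hUc
    refine ⟨norm, continuous_norm.continuousOn, fun C => ?_⟩
    convert isCompact_closedBall (0 : E) C using 1
    ext z
    simp
  have hpos {z} (hz : z ∈ U) : 0 < Metric.infDist z Uᶜ :=
    (hU.isClosed_compl.notMem_iff_infDist_pos hUc).1 fun hzc => hzc hz
  have hcont := Metric.continuous_infDist_pt Uᶜ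
  have hl : ContinuousOn (fun z => ‖z‖ + (Metric.infDist z Uᶜ)⁻¹) U :=
    continuous_norm.continuousOn.add (hcont.continuousOn.inv₀ fun z hz => (hpos hz).ne')
  refine ⟨_, hl, fun C => ?_⟩
  have hcompact : IsCompact (Metric.closedBall 0 C ∩ {z | (|C| + 1)⁻¹ ≤ Metric.infDist z Uᶜ}) :=
    (isCompact_closedBall _ _).inter_right (isClosed_le continuous_const hcont)
  have hsub : Metric.closedBall 0 C ∩ {z | (|C| + 1)⁻¹ ≤ Metric.infDist z Uᶜ} ⊆ U := by
    intro z hz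
    by_contra hzU
    have hle : (|C| + 1)⁻¹ ≤ Metric.infDist z Uᶜ := hz.2
    rw [Metric.infDist_zero_of_mem hzU] at hle
    exact hle.not_gt (by positivity)
  convert (hl.mono hsub).preimage_isClosed_of_isClosed hcompact.isClosed (isClosed_Iic (a := C))
    |> hcompact.of_isClosed_subset <| inter_subset_left using 1
  refine Subset.antisymm (fun z ⟨hz, hzC⟩ => ⟨⟨?_, ?_⟩, hzC⟩) fun z ⟨hz, hzC⟩ => ⟨hsub hz, hzC⟩
  · rw [mem_closedBall_zero_iff]
    linarith [inv_pos.2 (hpos hz)]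
  · exact inv_le_of_inv_le₀ (hpos hz) (by linarith [norm_nonneg z, le_abs_self C])

lemma harmonicOnC_re {U : Set ℂ} (hU : IsOpen U) {f : ℂ → ℂ} (hf : DifferentiableOn ℂ f U) :
    HarmonicOnC (fun z => (f z).re) U := by
  have hharm : ∀ z ∈ U, InnerProductSpace.HarmonicAt (fun z => (f z).re) z := fun z hz =>
    (hf.analyticOnNhd hU z hz).harmonicAt_re
  refine ⟨fun z hz => (hharm z hz).1.contDiffWithinAt, fun z hz => ?_⟩
  have hdiff : DifferentiableAt ℝ (fderiv ℝ fun z => (f z).re) z :=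
    ((hharm z hz).1.fderiv_right (m := 1) (by norm_num)).differentiableAt (by norm_num)
  have hlap := (hharm z hz).2.self_of_nhds
  rw [InnerProductSpace.laplacian_eq_iteratedFDeriv_complexPlane] at hlap
  simp only [iteratedFDeriv_two_apply, Pi.zero_apply] at hlap
  rw [fderiv_clm_apply hdiff (differentiableAt_const _),
    fderiv_clm_apply hdiff (differentiableAt_const _)]
  simpa using hlap

lemma isCompact_inter_preimage_of_dominates {U : Set ℂ} {l : ℂ → ℝ} {H : ℂ → ℂ × ℂ}
    (hl : ∀ C, IsCompact {z ∈ U | l z ≤ C}) (hH : ContinuousOn H U) (hdom : Dominates l H U)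
    {K : Set (ℝ × ℝ)} (hK : IsCompact K) :
    IsCompact (U ∩ (fun z => ((H z).1.re, (H z).2.re)) ⁻¹' K) := by
  obtain ⟨C, hC⟩ := hK.isBounded.exists_norm_le
  have hsub : U ∩ (fun z => ((H z).1.re, (H z).2.re)) ⁻¹' K ⊆ {z ∈ U | l z ≤ C} :=
    fun z ⟨hz, hzK⟩ => ⟨hz, (hdom z hz).le.trans <|
      (max_le_max (le_abs_self _) (le_abs_self _)).trans (hC _ hzK)⟩
  have hcont : ContinuousOn (fun z => ((H z).1.re, (H z).2.re)) {z ∈ U | l z ≤ C} :=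
    (by fun_prop : Continuous fun w : ℂ × ℂ => (w.1.re, w.2.re)).comp_continuousOn
      (hH.mono (sep_subset _ _))
  convert (hl C).of_isClosed_subset
    (hcont.preimage_isClosed_of_isClosed (hl C).isClosed hK.isClosed) inter_subset_left using 1
  exact Subset.antisymm (fun z hz => ⟨hsub hz, hz.2⟩) fun z hz => ⟨hz.1.1, hz.2⟩

end ProperMap

end ProperHarmonicMap

open ProperHarmonicMap in
theorem exists_proper_harmonic_map_to_R2_general (U : Set ℂ) (hU : IsOpen U) :
    ∃ h : ℂ → ℝ × ℝ,
      HarmonicOnC (fun z => (h z).1) U ∧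
      HarmonicOnC (fun z => (h z).2) U ∧
      (∀ K : Set (ℝ × ℝ), IsCompact K →
        IsCompact {z : ℂ | z ∈ U ∧ h z ∈ K} ∧ {z : ℂ | z ∈ U ∧ h z ∈ K} ⊆ U) := by
  obtain ⟨l, hl, hcompact⟩ := exists_continuousOn_isCompact_sublevel hU
  obtain ⟨H, hH, hdom⟩ := exists_dominates hU hl
  exact ⟨fun z => ((H z).1.re, (H z).2.re), harmonicOnC_re hU hH.fst, harmonicOnC_re hU hH.snd,
    fun K hK => ⟨isCompact_inter_preimage_of_dominates hcompact hH.continuousOn hdom hK,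
      fun z hz => hz.1⟩⟩

/-- **Proper harmonic maps into ℝ² from planar domains.**
Every nonempty connected open set `U ⊆ ℂ` admits a pair `h = (h₁, h₂)` of
functions harmonic on `U` such that `h : U → ℝ²` is a proper map, i.e. the
preimage of every compact subset of `ℝ²` is a compact subset of `U`.
(Taking `U` the unit disk disproves the Schoen–Yau conjecture.) -/
theorem exists_proper_harmonic_map_to_R2
    (U : Set ℂ) (hU : IsOpen U) (hUne : U.Nonempty) (hUconn : IsConnected U) :
    ∃ h : ℂ → ℝ × ℝ,
      HarmonicOnC (fun z => (h z).1) U ∧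
      HarmonicOnC (fun z => (h z).2) U ∧
      (∀ K : Set (ℝ × ℝ), IsCompact K →
        IsCompact {z : ℂ | z ∈ U ∧ h z ∈ K} ∧ {z : ℂ | z ∈ U ∧ h z ∈ K} ⊆ U) :=
  exists_proper_harmonic_map_to_R2_general U hU
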